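/- arXiv:2312.15669 — 6 statements merged into one kernel-verified Lean document; each statement's English description precedes it below -/
import Mathlib

section
/- Let f(n1,n2,x) be the Wronskian in x of the vector ψ with entries ψ_j(n1,n2,x) = ρ_j^+ e^{k_j x}(a1+k_j)^{n1}(a2+k_j)^{n2} + ρ_j^- e^{−k_j x}(a1−k_j)^{n1}(a2−k_j)^{n2}. Then f satisfies the bilinear H1 system at every (n1,n2,x): (∂_x f_2) f_1 − f_2 (∂_x f_1) + (a1 − a2)(f_1 f_2 − f f_12) = 0 and (∂_x f) f_12 − f (∂_x f_12) + (a1 + a2)(f f_12 − f_1 f_2) = 0, where f_1 = f(n1+1,n2,x), f_2 = f(n1,n2+1,x), f_12 = f(n1+1,n2+1,x). -/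
/-!
The exponential form of `ψ` enters only through three facts about the vector `ψ`: each shift acts
as a first-order operator in `x`, `ψ(n₁ + 1) = (∂ + a₁) ψ` and `ψ(n₂ + 1) = (∂ + a₂) ψ`, and
`∂² ψ_j = k_j² ψ_j`.

The first bilinear equation holds for any smooth vector and is an identity in the jet
`(ψ, ∂ψ, ∂²ψ, …)` (`wr_bilinear`). Put `α_i = (∂ + a_i) ψ` and `q_m = ∂^m (∂ + a₁)(∂ + a₂) ψ`.
For a Wronskian of size `n + 2`, row operations bring the determinants into the form
`ω(x, y) = det(x, y, q_0, …, q_{n-1})`: up to a common sign, `f_1 = ω(α₁, q_n)`,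
`f_2 = ω(α₂, q_n)`, `∂f_1 + a₂ f_1 = ω(α₁, q_{n+1})`, `∂f_2 + a₁ f_2 = ω(α₂, q_{n+1})`, while
`(a₁ - a₂) f = ω(α₁, α₂)` and `f_12 = ω(q_n, q_{n+1})`. The equation is then the three-term
Plücker relation for `ω` (`plucker`), which follows from Cramer's rule.

The second equation is the first one for the vector `φ = ψ(n₁ + 1)` and the parameters
`(-a₁, a₂)`: since `(∂ - a₁) φ_j = (k_j² - a₁²) ψ_j`, the operator `∂ - a₁` shifts `n₁` back, up to
the constant `∏ (k_j² - a₁²)`, which multiplies the Wronskians and is nonzero.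
-/

/-! ### The Plücker relation and reordering of rows -/

open Matrix in
/-- The three-term Plücker relation for `ω(x, y) = det(x, y, B)`. Cramer's rule expands
`ω(x, y) • v` in the rows `x, y, B`, and the linear form `ω(·, z)` is applied to that expansion; it
vanishes on the rows of `B`. -/
theorem plucker {R : Type*} [CommRing R] {n : ℕ} (B : Fin n → Fin (n + 2) → R)
    (x y v z : Fin (n + 2) → R) :
    (of (vecCons x (vecCons y B))).det * (of (vecCons v (vecCons z B))).det =
      (of (vecCons v (vecCons y B))).det * (of (vecCons x (vecCons z B))).det +
      (of (vecCons x (vecCons v B))).det * (of (vecCons y (vecCons z B))).det := by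
  set M : Matrix (Fin (n + 2)) (Fin (n + 2)) R := of (vecCons x (vecCons y B)) with hM
  let L : (Fin (n + 2) → R) →ₗ[R] R :=
    (detRowAlternating (R := R) (n := Fin (n + 2))).toMultilinearMap.toLinearMap
      (vecCons 0 (vecCons z B)) 0
  have hL (u : Fin (n + 2) → R) : L u = (of (vecCons u (vecCons z B))).det := by
    have : Function.update (vecCons 0 (vecCons z B)) 0 u = vecCons u (vecCons z B) := by
      simp [vecCons]
    change detRowAlternating (Function.update (vecCons 0 (vecCons z B)) 0 u) = _
    rw [this]; rfl
  have hc : ∑ i, (M.updateRow i v).det • M i = M.det • v := by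
    have h := mulVec_cramer Mᵀ v
    rw [det_transpose] at h
    rw [← h]
    ext j
    simp [mulVec, dotProduct, cramer_transpose_apply, mul_comm]
  have h := congrArg L hc
  rw [map_sum, L.map_smul] at h
  simp only [L.map_smul] at h
  rw [Fin.sum_univ_succ, Fin.sum_univ_succ] at h
  simp only [smul_eq_mul, hL] at h
  rw [← h, ← add_assoc]
  have h0 : M.updateRow 0 v = of (vecCons v (vecCons y B)) := by
    exact Fin.update_cons_zero (α := fun _ => Fin (n + 2) → R) x (vecCons y B) v
  have h1 : M.updateRow (Fin.succ 0) v = of (vecCons x (vecCons v B)) := by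
    ext i j
    refine Fin.cases ?_ (fun i => Fin.cases ?_ (fun i => ?_) i) i <;>
      simp [hM, updateRow_apply, Fin.ext_iff]
  rw [h0, h1]
  have h2 : ∀ i : Fin n, (of (vecCons (M i.succ.succ) (vecCons z B))).det = 0 := by
    intro i
    refine det_zero_of_row_eq (i := 0) (j := i.succ.succ) (by simp [Fin.ext_iff]) ?_
    ext j
    simp [hM]
  simp only [h2, mul_zero, Finset.sum_const_zero, add_zero]
  rfl

open Matrix in
theorem det_cons_snoc {R : Type*} [CommRing R] {n : ℕ} (B : Fin n → Fin (n + 2) → R)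
    (x y : Fin (n + 2) → R) :
    (of (vecCons x (Fin.snoc B y : Fin (n + 1) → Fin (n + 2) → R))).det =
      (-1) ^ n * (of (vecCons x (vecCons y B))).det := by
  rw [Fin.snoc_eq_cons_rotate]
  have h := ((detRowAlternating (R := R) (n := Fin (n + 2))).curryLeft x).map_perm
    (vecCons y B) (finRotate (n + 1))
  rw [sign_finRotate] at h
  simp only [AlternatingMap.curryLeft_apply_apply, Units.smul_def, zsmul_eq_mul] at h
  push_cast at h
  exact h

open Matrix in
/-- Moving the last two rows to the front does not change the determinant. -/
theorem det_snoc_snoc {R : Type*} [CommRing R] {n : ℕ} (B : Fin n → Fin (n + 2) → R)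
    (x y : Fin (n + 2) → R) :
    (of (Fin.snoc (Fin.snoc B x : Fin (n + 1) → Fin (n + 2) → R) y :
        Fin (n + 2) → Fin (n + 2) → R)).det =
      (of (vecCons x (vecCons y B))).det := by
  have h1 := (detRowAlternating (R := R) (n := Fin (n + 2))).map_perm
    (vecCons y (Fin.snoc B x : Fin (n + 1) → Fin (n + 2) → R)) (finRotate (n + 2))
  have h2 := (detRowAlternating (R := R) (n := Fin (n + 2))).map_swap
    (vecCons x (vecCons y B)) (i := 0) (j := 1) (by simp)
  have h3 : (vecCons x (vecCons y B)) ∘ Equiv.swap 0 1 = vecCons y (vecCons x B) := by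
    funext i
    refine Fin.cases ?_ (fun i => Fin.cases ?_ (fun i => ?_) i) i
    · simp
    · simp
    · rw [Function.comp_apply, Equiv.swap_apply_of_ne_of_ne] <;> simp [Fin.ext_iff]
  rw [h3] at h2
  have h4 := det_cons_snoc B y x
  rw [sign_finRotate] at h1
  simp only [Units.smul_def, zsmul_eq_mul] at h1
  push_cast at h1
  rw [Fin.snoc_eq_cons_rotate (Fin.snoc B x : Fin (n + 1) → Fin (n + 2) → R) y]
  change detRowAlternating _ = detRowAlternating _ 
  change detRowAlternating _ = _ * detRowAlternating _ at h4
  refine h1.trans ?_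
  refine (congrArg _ h4).trans ?_
  refine (congrArg _ (congrArg _ h2)).trans ?_
  have : ((-1 : R) ^ n) * (-1) ^ n = 1 := by rw [← mul_pow]; simp
  change (-1) ^ (n + 1) * ((-1) ^ n * -detRowAlternating (vecCons x (vecCons y B))) =
    detRowAlternating (vecCons x (vecCons y B))
  rw [pow_succ]
  linear_combination (detRowAlternating (vecCons x (vecCons y B))) * this

/-! ### Wronskians as functions of a jet -/

/-- The operator `∂ + a` on jets: `v m` stands for the `m`-th derivative of a vector function. -/
def shiftAdd {R : Type*} [CommRing R] {N : ℕ} (a : R) (v : ℕ → Fin N → R) : ℕ → Fin N → R :=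
  fun m => v (m + 1) + a • v m

theorem shiftAdd_comm {R : Type*} [CommRing R] {N : ℕ} (a b : R) (v : ℕ → Fin N → R) :
    shiftAdd a (shiftAdd b v) = shiftAdd b (shiftAdd a v) := by
  funext m j
  simp [shiftAdd]
  ring

/-- The Wronskian of the vector function with jet `v`. Derivatives are indexed by rows here. -/
def wr {R : Type*} [CommRing R] {N : ℕ} (v : ℕ → Fin N → R) : R :=
  (Matrix.of fun m : Fin N => v m).det

/-- The derivative of the Wronskian, in terms of the jet `v`: only the last row is differentiated,
since differentiating any other row makes two rows equal. -/
def wr' {R : Type*} [CommRing R] {N : ℕ} (v : ℕ → Fin (N + 1) → R) : R :=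
  (Matrix.of (Fin.snoc (fun m : Fin N => v m) (v (N + 1)) :
    Fin (N + 1) → Fin (N + 1) → R)).det

theorem hasDerivAt_wr {N : ℕ} (v : ℝ → ℕ → Fin (N + 1) → ℂ) (x : ℝ)
    (hv : ∀ m, HasDerivAt (fun t => v t m) (v x (m + 1)) x) :
    HasDerivAt (fun t => wr (v t)) (wr' (v x)) x := by
  let D : ContinuousMultilinearMap ℝ (fun _ : Fin (N + 1) => Fin (N + 1) → ℂ) ℂ :=
    { toMultilinearMap := (Matrix.detRowAlternating (R := ℂ)
        (n := Fin (N + 1))).toMultilinearMap.restrictScalars ℝ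
      cont := Continuous.matrix_det continuous_id }
  have h := (HasFDerivAt.multilinear_comp D (x := x)
    (fun i : Fin (N + 1) => (hv i).hasFDerivAt)).hasDerivAt
  have hD : ∀ u, D u = (Matrix.of u).det := fun _ => rfl
  refine h.congr_deriv ?_
  simp only [sum_apply, ContinuousLinearMap.comp_apply,
    ContinuousLinearMap.toSpanSingleton_apply, one_smul,
    ContinuousMultilinearMap.toContinuousLinearMap_apply, hD]
  rw [Fin.sum_univ_castSucc, Finset.sum_eq_zero, zero_add]
  · unfold wr'
    congr 2
    funext i
    refine Fin.lastCases ?_ (fun i => ?_) i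
    · simp
    · rw [Function.update_of_ne (Fin.castSucc_lt_last i).ne]; simp
  -- Differentiating a row other than the last one duplicates the next row.
  · intro i _
    refine Matrix.det_zero_of_row_eq (i := i.castSucc) (j := i.succ)
      (Fin.castSucc_lt_succ).ne ?_
    change Function.update (fun j : Fin (N + 1) => v x j) i.castSucc (v x (i + 1)) i.castSucc =
      Function.update (fun j : Fin (N + 1) => v x j) i.castSucc (v x (i + 1)) i.succ
    rw [Function.update_self, Function.update_of_ne (Fin.castSucc_lt_succ (i := i)).ne']
    simp

open Matrix in
/-- The row operation adding `b` times the preceding row turns `∂^(m+1) (∂ + a) ψ` into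
`∂^m (∂ + b)(∂ + a) ψ`. -/
theorem wr_shiftAdd {R : Type*} [CommRing R] {n : ℕ} (a b : R) (v : ℕ → Fin (n + 2) → R) :
    wr (shiftAdd a v) = (of (vecCons (shiftAdd a v 0) (Fin.snoc
      (fun i : Fin n => shiftAdd b (shiftAdd a v) i) (shiftAdd b (shiftAdd a v) n) :
        Fin (n + 1) → Fin (n + 2) → R))).det := by
  refine det_eq_of_forall_row_eq_smul_add_pred (fun _ => -b) ?_ ?_
  · intro j; simp
  · intro i j
    refine Fin.lastCases ?_ (fun i => ?_) i
    · simp only [of_apply, cons_val_succ, Fin.snoc_last]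
      simp [shiftAdd]
      ring
    · simp only [of_apply, cons_val_succ, Fin.snoc_castSucc]
      simp [shiftAdd]
      ring

open Matrix in
/-- The term `b * wr` completes the last row of `wr'` so that it too has the factor `∂ + b`. -/
theorem wr'_shiftAdd {R : Type*} [CommRing R] {n : ℕ} (a b : R) (v : ℕ → Fin (n + 2) → R) :
    wr' (shiftAdd a v) + b * wr (shiftAdd a v) = (of (vecCons (shiftAdd a v 0) (Fin.snoc
      (fun i : Fin n => shiftAdd b (shiftAdd a v) i) (shiftAdd b (shiftAdd a v) (n + 1)) :
        Fin (n + 1) → Fin (n + 2) → R))).det := by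
  generalize shiftAdd a v = w
  have hadd : wr' w + b * wr w = (of (Fin.snoc (fun m : Fin (n + 1) => w m)
      (shiftAdd b w (n + 1)) : Fin (n + 2) → Fin (n + 2) → R)).det := by
    have h1 := (detRowAlternating (R := R) (n := Fin (n + 2))).map_update_add
      (Fin.snoc (fun m : Fin (n + 1) => w m) 0) (Fin.last _) (w (n + 2)) (b • w (n + 1))
    rw [AlternatingMap.map_update_smul] at h1
    simp only [Fin.update_snoc_last] at h1
    have h2 : (Fin.snoc (fun m : Fin (n + 1) => w m) (w (n + 1)) :
        Fin (n + 2) → Fin (n + 2) → R) = fun m : Fin (n + 2) => w m := by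
      funext i
      refine Fin.lastCases ?_ (fun i => ?_) i <;> simp
    rw [h2] at h1
    exact h1.symm
  rw [hadd]
  refine det_eq_of_forall_row_eq_smul_add_pred (Fin.snoc (fun _ => -b) 0) ?_ ?_
  · intro j
    rw [← Fin.castSucc_zero]
    simp only [of_apply, Fin.snoc_castSucc]
    simp
  · intro i j
    refine Fin.lastCases ?_ (fun i => ?_) i
    · simp only [of_apply, cons_val_succ, Fin.snoc_last]
      simp only [Fin.succ_last, Fin.snoc_last]
      simp
    · simp only [of_apply, ← Fin.castSucc_succ, Fin.snoc_castSucc]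
      simp [shiftAdd]

open Matrix in
/-- The Wronskian written in the basis `1, ∂ + a, ∂^m (∂ + a)(∂ + b)` of operators. -/
theorem wr_eq {R : Type*} [CommRing R] {n : ℕ} (a b : R) (v : ℕ → Fin (n + 2) → R) :
    wr v = (of (vecCons (v 0) (vecCons (shiftAdd a v 0)
      (fun i : Fin n => shiftAdd b (shiftAdd a v) i)))).det := by
  have h1 : wr v = (of (vecCons (v 0) (fun i : Fin (n + 1) => shiftAdd a v i))).det := by
    refine det_eq_of_forall_row_eq_smul_add_pred (fun _ => -a) ?_ ?_
    · intro j; simp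
    · intro i j; simp [shiftAdd]
  rw [h1]
  refine det_eq_of_forall_row_eq_smul_add_pred (Fin.cons 0 fun _ => -b) ?_ ?_
  · intro j; simp
  · intro i j
    refine Fin.cases ?_ (fun i => ?_) i
    · simp
    · simp only [of_apply, cons_val_succ, ← Fin.succ_castSucc]
      simp [shiftAdd]
      ring

/-! ### The bilinear identity for jets -/

open Matrix in
theorem of_det_cons_add_smul {R : Type*} [CommRing R] {n : ℕ} (B : Fin n → Fin (n + 1) → R)
    (x y : Fin (n + 1) → R) (c : R) :
    (of (vecCons (x + c • y) B)).det = (of (vecCons x B)).det + c * (of (vecCons y B)).det := by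
  have h := congrArg (fun F => F B)
    ((detRowAlternating (R := R) (n := Fin (n + 1))).curryLeft.map_add x (c • y))
  rw [LinearMap.map_smul] at h
  exact h

open Matrix in
/-- The first bilinear equation, for an arbitrary jet `v`. -/
theorem wr_bilinear {R : Type*} [CommRing R] {N : ℕ} (a b : R) (v : ℕ → Fin (N + 1) → R) :
    wr' (shiftAdd b v) * wr (shiftAdd a v) - wr (shiftAdd b v) * wr' (shiftAdd a v) +
      (a - b) * (wr (shiftAdd a v) * wr (shiftAdd b v) -
        wr v * wr (shiftAdd a (shiftAdd b v))) = 0 := by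
  rcases N with _ | n
  -- For size one there is no room for two distinguished rows, and the identity is checked directly.
  · have h (u : ℕ → Fin 1 → R) : wr u = u 0 0 := by simp [wr]
    have h' (u : ℕ → Fin 1 → R) : wr' u = u 1 0 := by simp [wr', Fin.snoc]
    simp only [h, h', shiftAdd, Pi.add_apply, Pi.smul_apply, smul_eq_mul]
    ring
  · have e1 := wr_shiftAdd a b v
    have e2 := wr_shiftAdd b a v
    have e1' := wr'_shiftAdd a b v
    have e2' := wr'_shiftAdd b a v
    have e := wr_eq a b v
    rw [shiftAdd_comm b a v] at e1 e1' e
    have e12 : wr (shiftAdd a (shiftAdd b v)) = _ :=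
      (congrArg (fun u => (of u).det) (by
        funext i
        refine Fin.lastCases ?_ (fun i => Fin.lastCases ?_ (fun i => ?_) i) i <;> simp)).trans
        (det_snoc_snoc (fun i : Fin n => shiftAdd a (shiftAdd b v) i)
          (shiftAdd a (shiftAdd b v) n) (shiftAdd a (shiftAdd b v) (n + 1)))
    rw [det_cons_snoc] at e1 e2 e1' e2'
    set q := shiftAdd a (shiftAdd b v)
    have hP := plucker (fun i : Fin n => q i) (shiftAdd b v 0) (q n) (shiftAdd a v 0) (q (n + 1))
    -- `(∂ + b) ψ - (∂ + a) ψ = (b - a) ψ`, and `ω(x, x) = 0`.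
    have hω : (of (vecCons (shiftAdd b v 0) (vecCons (shiftAdd a v 0)
        (fun i : Fin n => q i)))).det = (b - a) * wr v := by
      have hα : shiftAdd b v 0 = shiftAdd a v 0 + (b - a) • v 0 := by
        funext j
        simp [shiftAdd]
        ring
      have h0 : (of (vecCons (shiftAdd a v 0) (vecCons (shiftAdd a v 0)
          (fun i : Fin n => q i)))).det = 0 :=
        det_zero_of_row_eq (i := 0) (j := 1) (by simp) rfl
      rw [hα, of_det_cons_add_smul, h0, ← e, zero_add]
    rw [hω, ← e12] at hP
    have hs : ((-1 : R) ^ n) * (-1) ^ n = 1 := by rw [← mul_pow]; simp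
    rw [eq_sub_of_add_eq e1', eq_sub_of_add_eq e2', e1, e2]
    linear_combination (-1) * hP +
      ((of (vecCons (shiftAdd b v 0) (vecCons (q (n + 1)) fun i : Fin n => q i))).det *
          (of (vecCons (shiftAdd a v 0) (vecCons (q n) fun i : Fin n => q i))).det -
        (of (vecCons (shiftAdd b v 0) (vecCons (q n) fun i : Fin n => q i))).det *
          (of (vecCons (shiftAdd a v 0) (vecCons (q (n + 1)) fun i : Fin n => q i))).det) * hs

theorem wr'_eq_mul {R : Type*} [CommRing R] {N : ℕ} (c : Fin (N + 1) → R)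
    (u v : ℕ → Fin (N + 1) → R) (h : ∀ m j, u m j = c j * v m j) :
    wr' u = (∏ j, c j) * wr' v := by
  unfold wr'
  rw [← Matrix.det_mul_row]
  congr 1
  ext i j
  refine Fin.lastCases ?_ (fun i => ?_) i <;> simp [h]

theorem wr_eq_mul {R : Type*} [CommRing R] {N : ℕ} (c : Fin N → R)
    (u v : ℕ → Fin N → R) (h : ∀ m j, u m j = c j * v m j) :
    wr u = (∏ j, c j) * wr v := by
  unfold wr
  rw [← Matrix.det_mul_row]
  congr 1
  ext i j
  simp [h]

/-! ### The jet of the exponential solution -/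

/-- The jet of the vector `ψ`: the value at `m` and `j` is the `m`-th `x`-derivative of `ψ_j`. -/
noncomputable def jet {N : ℕ} (a1 a2 : ℂ) (k ρp ρm : Fin N → ℂ) (n1 n2 : ℤ) (x : ℝ) :
    ℕ → Fin N → ℂ := fun m j =>
  ρp j * k j ^ m * Complex.exp (k j * (x : ℂ)) * (a1 + k j) ^ n1 * (a2 + k j) ^ n2 +
    ρm j * (-(k j)) ^ m * Complex.exp (-(k j) * (x : ℂ)) * (a1 - k j) ^ n1 * (a2 - k j) ^ n2

theorem hasDerivAt_jet {N : ℕ} (a1 a2 : ℂ) (k ρp ρm : Fin N → ℂ) (n1 n2 : ℤ) (x : ℝ)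
    (m : ℕ) (j : Fin N) :
    HasDerivAt (fun t => jet a1 a2 k ρp ρm n1 n2 t m j)
      (jet a1 a2 k ρp ρm n1 n2 x (m + 1) j) x := by
  have he (c : ℂ) : HasDerivAt (fun t : ℝ => Complex.exp (c * (t : ℂ)))
      (Complex.exp (c * (x : ℂ)) * c) x := by
    simpa using ((Complex.ofRealCLM.hasDerivAt (x := x)).const_mul c).cexp
  refine (((((he (k j)).const_mul (ρp j * k j ^ m)).mul_const ((a1 + k j) ^ n1)).mul_const
    ((a2 + k j) ^ n2)).add ((((he (-(k j))).const_mul (ρm j * (-(k j)) ^ m)).mul_const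
    ((a1 - k j) ^ n1)).mul_const ((a2 - k j) ^ n2))).congr_deriv ?_
  simp only [jet]
  ring


theorem stmt_1 (N : ℕ) (hN : 1 ≤ N) (a1 a2 : ℂ) (k ρp ρm : Fin N → ℂ)
    (ha1 : ∀ j, a1 + k j ≠ 0) (ha1' : ∀ j, a1 - k j ≠ 0)
    (ha2 : ∀ j, a2 + k j ≠ 0) (ha2' : ∀ j, a2 - k j ≠ 0)
    (ψ : Fin N → ℤ → ℤ → ℝ → ℂ)
    (hψ : ∀ j n1 n2 x, ψ j n1 n2 x =
      ρp j * Complex.exp (k j * (x : ℂ)) * (a1 + k j) ^ n1 * (a2 + k j) ^ n2 +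
      ρm j * Complex.exp (-(k j) * (x : ℂ)) * (a1 - k j) ^ n1 * (a2 - k j) ^ n2)
    (f : ℤ → ℤ → ℝ → ℂ)
    (hf : ∀ n1 n2 x, f n1 n2 x =
      (Matrix.of fun j m : Fin N => iteratedDeriv m.1 (fun t => ψ j n1 n2 t) x).det) :
    ∀ n1 n2 : ℤ, ∀ x : ℝ,
      (deriv (fun t => f n1 (n2 + 1) t) x * f (n1 + 1) n2 x -
        f n1 (n2 + 1) x * deriv (fun t => f (n1 + 1) n2 t) x +
        (a1 - a2) * (f (n1 + 1) n2 x * f n1 (n2 + 1) x -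
          f n1 n2 x * f (n1 + 1) (n2 + 1) x) = 0) ∧
      (deriv (fun t => f n1 n2 t) x * f (n1 + 1) (n2 + 1) x -
        f n1 n2 x * deriv (fun t => f (n1 + 1) (n2 + 1) t) x +
        (a1 + a2) * (f n1 n2 x * f (n1 + 1) (n2 + 1) x -
          f (n1 + 1) n2 x * f n1 (n2 + 1) x) = 0) := by
  obtain ⟨N, rfl⟩ : ∃ M, N = M + 1 := ⟨N - 1, by omega⟩
  set V := jet a1 a2 k ρp ρm with hV
  have hψV : ∀ j n1 n2, ψ j n1 n2 = fun x => V n1 n2 x 0 j := by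
    intro j n1 n2
    funext x
    simp [hψ, hV, jet]
  have hit : ∀ j n1 n2 m, iteratedDeriv m (ψ j n1 n2) = fun x => V n1 n2 x m j := by
    intro j n1 n2 m
    induction m with
    | zero => rw [iteratedDeriv_zero, hψV]
    | succ m ih =>
      rw [iteratedDeriv_succ, ih]
      funext x
      exact (hasDerivAt_jet a1 a2 k ρp ρm n1 n2 x m j).deriv
  have hfW : ∀ n1 n2, f n1 n2 = fun x => wr (V n1 n2 x) := by
    intro n1 n2
    funext x
    rw [hf, ← Matrix.det_transpose]
    unfold wr
    congr 1
    ext m j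
    exact congrFun (hit j n1 n2 m) x
  have hd : ∀ n1 n2 x, deriv (fun t => f n1 n2 t) x = wr' (V n1 n2 x) := by
    intro n1 n2 x
    rw [hfW]
    exact (hasDerivAt_wr (V n1 n2) x fun m => hasDerivAt_pi.2 fun j =>
      hasDerivAt_jet a1 a2 k ρp ρm n1 n2 x m j).deriv
  have hs1 : ∀ n1 n2 x, V (n1 + 1) n2 x = shiftAdd a1 (V n1 n2 x) := by
    intro n1 n2 x
    funext m j
    simp only [hV, jet, shiftAdd, Pi.add_apply, Pi.smul_apply, smul_eq_mul,
      zpow_add_one₀ (ha1 j), zpow_add_one₀ (ha1' j)]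
    ring
  have hs2 : ∀ n1 n2 x, V n1 (n2 + 1) x = shiftAdd a2 (V n1 n2 x) := by
    intro n1 n2 x
    funext m j
    simp only [hV, jet, shiftAdd, Pi.add_apply, Pi.smul_apply, smul_eq_mul,
      zpow_add_one₀ (ha2 j), zpow_add_one₀ (ha2' j)]
    ring
  -- `(∂ - a₁)(∂ + a₁) ψ_j = (k_j² - a₁²) ψ_j`, because `∂² ψ_j = k_j² ψ_j`.
  have hback : ∀ n1 n2 x m j, shiftAdd (-a1) (V (n1 + 1) n2 x) m j =
      (-((a1 + k j) * (a1 - k j))) * V n1 n2 x m j := by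
    intro n1 n2 x m j
    simp only [hV, jet, shiftAdd, Pi.add_apply, Pi.smul_apply, smul_eq_mul,
      zpow_add_one₀ (ha1 j), zpow_add_one₀ (ha1' j)]
    ring
  intro n1 n2 x
  simp only [hd]
  simp only [hfW]
  constructor
  · have h := wr_bilinear a1 a2 (V n1 n2 x)
    rw [← hs2, ← hs1, ← hs1] at h
    exact h
  · have h := wr_bilinear (-a1) a2 (V (n1 + 1) n2 x)
    rw [← hs2, wr_eq_mul _ _ _ (hback n1 n2 x), wr'_eq_mul _ _ _ (hback n1 n2 x),
      wr_eq_mul _ _ _ (hback n1 (n2 + 1) x)] at h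
    have hC : ∏ j, (-((a1 + k j) * (a1 - k j))) ≠ 0 :=
      Finset.prod_ne_zero_iff.2 fun j _ => neg_ne_zero.2 (mul_ne_zero (ha1 j) (ha1' j))
    refine (mul_eq_zero.1 (?_ : (∏ j, (-((a1 + k j) * (a1 - k j)))) * _ = 0)).resolve_left hC
    linear_combination (-1) * h
end

section
/- Let f = |0,…,N−1|_{[l1]}, g = |0,…,N−2,N|_{[l1]} and h = |0,…,N−3,N−1,N|_{[l1]} + |0,…,N−2,N+1|_{[l1]} be Casoratians in l1 built from the vector ψ with entries ψ_j(n1,n2,l1) = ρ_j^+ k_j^{l1}(a1+k_j)^{n1}(a2+k_j)^{n2} + ρ_j^- (−k_j)^{l1}(a1−k_j)^{n1}(a2−k_j)^{n2}. Then at every (n1,n2,l1) the bilinear H2 system holds: 2a1(f_1 g − f g_1) − 2 g g_1 + h_1 f + h f_1 = 0 and 2a2(f_2 g − f g_2) − 2 g g_2 + h_2 f + h f_2 = 0, where subscripts 1, 2 denote forward unit shifts in n1, n2. -/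
/-! Write `v_m` for the column `ψ` at `l1 + m`, and `w_m` for the same column after the unit shift in
`n_i`. Only two linear facts about `ψ` matter: `v_{m+2} = D v_m` with `D = diag (k_j²)`, and
`w_m = a v_m + v_{m+1}`; hence also `w_{m+2} = D w_m`.
Put `h = h' + h''`, with `h' = |0,…,N-3,N-1,N|` and `h'' = |0,…,N-2,N+1|`, and let a subscript `1`
mark the Casoratians of `w`.

* Replacing each column of `f` in turn by its image under `D` and adding up gives
  `tr D * f = h'' - h'`, and likewise `tr D * f_1 = h''_1 - h'_1` (`casVec_trace`).
* Cramer's rule expands `f_1 • w_N` in the columns `w_0, …, w_{N-1}`, the last two coefficients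
  being `-h'_1` and `g_1`. Applying the linear form `x ↦ |v_0, …, v_{N-2}, x|` to this expansion
  yields `f_1 (a g + h'') = g_1 (a f + g) - h'_1 f` (`casVec_cramer`).

The bilinear equation is a linear combination of these three identities. Cramer's rule is used in
its division-free form, so nothing is assumed about `f` or `f_1` being nonzero.
-/

/-- The matrix with columns `v 0, …, v (N - 1)`, where `N = n + 2`. -/
def casMat {n : ℕ} (v : ℕ → Fin (n + 2) → ℂ) : Matrix (Fin (n + 2)) (Fin (n + 2)) ℂ :=
  Matrix.of fun j m => v m.1 j

/-- The next-to-last column index, `N - 2`. -/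
def penult (n : ℕ) : Fin (n + 2) := (Fin.last n).castSucc

lemma cramer_casMat_col {n : ℕ} (v : ℕ → Fin (n + 2) → ℂ) (m i : Fin (n + 2)) :
    (casMat v).cramer (v m.1) i = if i = m then (casMat v).det else 0 := by
  rw [Matrix.cramer_row_self (casMat v) (v m.1) m (fun j => rfl), Pi.single_apply]

/-- `tr D * f = h'' - h'`: the sum of the determinants obtained by applying `D` to one column at a
time, where all terms but the last two have a repeated column. The term at position `N - 2` is
`|0,…,N-3,N,N-1| = -h'`. -/
lemma casVec_trace {n : ℕ} (v : ℕ → Fin (n + 2) → ℂ) (d : Fin (n + 2) → ℂ)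
    (hv : ∀ m, v (m + 2) = d * v m) :
    (∑ j, d j) * (casMat v).det =
      (casMat v).cramer (v (n + 2)) (penult n) +
        (casMat v).cramer (v (n + 3)) (Fin.last (n + 1)) := by
  have key : ∑ m : Fin (n + 2), (casMat v).cramer (v (m.1 + 2)) m =
      (∑ j, d j) * (casMat v).det := by
    have h1 : ∑ m : Fin (n + 2), (casMat v).cramer (v (m.1 + 2)) m =
        ((casMat v).adjugate * (Matrix.diagonal d * casMat v)).trace := by
      rw [Matrix.trace]
      refine Finset.sum_congr rfl fun m _ => ?_
      rw [Matrix.cramer_eq_adjugate_mulVec, Matrix.diag_apply, Matrix.mul_apply, Matrix.mulVec,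
        dotProduct]
      refine Finset.sum_congr rfl fun j _ => ?_
      rw [hv, Matrix.diagonal_mul]
      rfl
    rw [h1, Matrix.trace_mul_comm, Matrix.mul_assoc, Matrix.mul_adjugate]
    simp [Matrix.trace_smul, Matrix.trace_diagonal, mul_comm]
  rw [← key, Fin.sum_univ_castSucc, Fin.sum_univ_castSucc, Finset.sum_eq_zero, zero_add]
  · rfl
  · intro m _
    have := cramer_casMat_col v ⟨m.1 + 2, by omega⟩ m.castSucc.castSucc
    rw [if_neg (by simp [Fin.ext_iff])] at this
    exact this

/-- `f_1 (a g + h'') = g_1 (a f + g) - h'_1 f`, from Cramer's rule for `w_N`. -/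
lemma casVec_cramer {n : ℕ} (v w : ℕ → Fin (n + 2) → ℂ) (a : ℂ)
    (hw : ∀ m, w m = a • v m + v (m + 1)) :
    (casMat w).det * (a * (casMat v).cramer (v (n + 2)) (Fin.last (n + 1)) +
        (casMat v).cramer (v (n + 3)) (Fin.last (n + 1))) =
      (casMat w).cramer (w (n + 2)) (Fin.last (n + 1)) *
        (a * (casMat v).det + (casMat v).cramer (v (n + 2)) (Fin.last (n + 1))) +
      (casMat w).cramer (w (n + 2)) (penult n) * (casMat v).det := by
  have expand : (casMat w).det • w (n + 2) =
      ∑ m : Fin (n + 2), (casMat w).cramer (w (n + 2)) m • w m.1 := by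
    rw [← Matrix.mulVec_cramer]
    ext j
    simp [Matrix.mulVec, dotProduct, casMat, mul_comm]
  have happ := congrArg (fun x => (casMat v).cramer x (Fin.last (n + 1))) expand
  have hL : ∀ m, (casMat v).cramer (w m) (Fin.last (n + 1)) =
      a * (casMat v).cramer (v m) (Fin.last (n + 1)) +
        (casMat v).cramer (v (m + 1)) (Fin.last (n + 1)) := by
    intro m
    rw [hw]
    simp
  simp only [map_smul, map_sum, Finset.sum_apply, Pi.smul_apply, smul_eq_mul, hL] at happ
  rw [happ, Fin.sum_univ_castSucc, Fin.sum_univ_castSucc, Finset.sum_eq_zero, zero_add]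
  · have e1 := cramer_casMat_col v (Fin.last (n + 1)) (Fin.last (n + 1))
    have e2 := cramer_casMat_col v (penult n) (Fin.last (n + 1))
    rw [if_pos rfl] at e1
    rw [if_neg (by simp [penult, Fin.ext_iff])] at e2
    simp only [Fin.val_last, Fin.val_castSucc, penult] at e1 e2 ⊢
    rw [e1, e2]
    ring
  · intro m _
    have e1 := cramer_casMat_col v m.castSucc.castSucc (Fin.last (n + 1))
    have e2 := cramer_casMat_col v m.succ.castSucc (Fin.last (n + 1))
    have hm := m.2
    rw [if_neg (by simp only [Fin.ext_iff, Fin.val_last, Fin.val_castSucc]; omega)] at e1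
    rw [if_neg (by simp only [Fin.ext_iff, Fin.val_last, Fin.val_castSucc, Fin.val_succ]; omega)]
      at e2
    simp only [Fin.val_castSucc, Fin.val_succ] at e1 e2 ⊢
    rw [e1, e2]
    ring

/-- The bilinear equation for two abstract column sequences; here `h'` appears as minus the
Cramer determinant with `v_N` in position `N - 2`. -/
lemma casVec_bilinear {n : ℕ} (v w : ℕ → Fin (n + 2) → ℂ) (d : Fin (n + 2) → ℂ) (a : ℂ)
    (hv : ∀ m, v (m + 2) = d * v m) (hw : ∀ m, w m = a • v m + v (m + 1)) :
    2 * a * ((casMat w).det * (casMat v).cramer (v (n + 2)) (Fin.last (n + 1)) -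
        (casMat v).det * (casMat w).cramer (w (n + 2)) (Fin.last (n + 1))) -
      2 * (casMat v).cramer (v (n + 2)) (Fin.last (n + 1)) *
        (casMat w).cramer (w (n + 2)) (Fin.last (n + 1)) +
      (-(casMat w).cramer (w (n + 2)) (penult n) +
        (casMat w).cramer (w (n + 3)) (Fin.last (n + 1))) * (casMat v).det +
      (-(casMat v).cramer (v (n + 2)) (penult n) +
        (casMat v).cramer (v (n + 3)) (Fin.last (n + 1))) * (casMat w).det = 0 := by
  have hwd : ∀ m, w (m + 2) = d * w m := by
    intro m
    rw [hw, hw, hv, show m + 2 + 1 = m + 1 + 2 by omega, hv, mul_add, mul_smul_comm]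
  linear_combination 2 * casVec_cramer v w a hw + (casMat w).det * casVec_trace v d hv -
    (casMat v).det * casVec_trace w d hwd

/-- Casoratians whose last column is `v q` are Cramer determinants. -/
lemma det_last_col {n : ℕ} (v : ℕ → Fin (n + 2) → ℂ) (u : ℤ → Fin (n + 2) → ℂ) (l : ℤ) (q : ℤ)
    (q' : ℕ) (hq : q = q') (huv : ∀ m : ℕ, u (l + m) = v m) :
    (Matrix.of fun j m : Fin (n + 2) =>
      u (l + (if m.1 = n + 2 - 1 then q else (m.1 : ℤ))) j).det =
      (casMat v).cramer (v q') (Fin.last (n + 1)) := by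
  rw [Matrix.cramer_apply]
  congr 1
  ext j m
  rw [Matrix.updateCol_apply]
  by_cases hm : m = Fin.last (n + 1)
  · subst hm
    simp [hq, huv]
  · have : m.1 ≠ n + 2 - 1 := fun h => hm (Fin.ext (by simpa using h))
    rw [if_neg hm, Matrix.of_apply, if_neg this, huv]
    rfl

/-- `|0,…,N-3,N-1,N|` differs by one column transposition from the Cramer determinant with `v_N` in
position `N - 2`. -/
lemma det_penult_col {n : ℕ} (v : ℕ → Fin (n + 2) → ℂ) (u : ℤ → Fin (n + 2) → ℂ) (l : ℤ)
    (huv : ∀ m : ℕ, u (l + m) = v m) :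
    (Matrix.of fun j m : Fin (n + 2) =>
      u (l + (if m.1 = n + 2 - 1 then ((n + 2 : ℕ) : ℤ)
        else if m.1 = n + 2 - 2 then ((n + 2 : ℕ) : ℤ) - 1 else (m.1 : ℤ))) j).det =
      -(casMat v).cramer (v (n + 2)) (penult n) := by
  have hne : penult n ≠ Fin.last (n + 1) := by simp [penult, Fin.ext_iff]
  have hperm := Matrix.det_permute' (Equiv.swap (penult n) (Fin.last (n + 1)))
    ((casMat v).updateCol (penult n) (v (n + 2)))
  rw [Equiv.Perm.sign_swap hne] at hperm
  rw [Matrix.cramer_apply]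
  have hs : ∀ x : ℂ, -x = ((-1 : ℤˣ) : ℂ) * x := by intro x; simp
  rw [hs, ← hperm]
  congr 1
  ext j m
  rw [Matrix.submatrix_apply, Matrix.updateCol_apply, Matrix.of_apply]
  by_cases hm : m = Fin.last (n + 1)
  · subst hm
    rw [Equiv.swap_apply_right, if_pos rfl, if_pos (by simp), huv]
    rfl
  by_cases hp : m = penult n
  · subst hp
    rw [Equiv.swap_apply_left, if_neg hne.symm, if_neg (by simp [penult]),
      if_pos (by simp [penult]), show ((n + 2 : ℕ) : ℤ) - 1 = ((n + 1 : ℕ) : ℤ) by push_cast; ring,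
      huv]
    rfl
  · have h1 : m.1 ≠ n + 2 - 1 := fun h => hm (Fin.ext (by simpa using h))
    have h2 : m.1 ≠ n + 2 - 2 := fun h => hp (Fin.ext (by simpa [penult] using h))
    rw [Equiv.swap_apply_of_ne_of_ne hp hm, if_neg hp, if_neg h1, if_neg h2, huv]
    rfl


/-- The Casoratians `f = |0,…,N−1|_{[l1]}`, `g = |0,…,N−2,N|_{[l1]}` and
`h = |0,…,N−3,N−1,N|_{[l1]} + |0,…,N−2,N+1|_{[l1]}` built from the H2 entries
satisfy the bilinear H2 system. -/
theorem stmt_3 (N : ℕ) (hN : 2 ≤ N) (a1 a2 : ℂ) (k ρp ρm : Fin N → ℂ)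
    (hk : ∀ j, k j ≠ 0)
    (ha1 : ∀ j, a1 + k j ≠ 0) (ha1' : ∀ j, a1 - k j ≠ 0)
    (ha2 : ∀ j, a2 + k j ≠ 0) (ha2' : ∀ j, a2 - k j ≠ 0)
    (ψ : Fin N → ℤ → ℤ → ℤ → ℂ)
    (hψ : ∀ j n1 n2 l1, ψ j n1 n2 l1 =
      ρp j * (k j) ^ l1 * (a1 + k j) ^ n1 * (a2 + k j) ^ n2 +
      ρm j * (-(k j)) ^ l1 * (a1 - k j) ^ n1 * (a2 - k j) ^ n2)
    (f g h : ℤ → ℤ → ℤ → ℂ)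
    (hf : ∀ n1 n2 l1, f n1 n2 l1 =
      (Matrix.of fun j m : Fin N => ψ j n1 n2 (l1 + (m.1 : ℤ))).det)
    (hg : ∀ n1 n2 l1, g n1 n2 l1 =
      (Matrix.of fun j m : Fin N =>
        ψ j n1 n2 (l1 + (if m.1 = N - 1 then (N : ℤ) else (m.1 : ℤ)))).det)
    (hh : ∀ n1 n2 l1, h n1 n2 l1 =
      (Matrix.of fun j m : Fin N =>
        ψ j n1 n2 (l1 + (if m.1 = N - 1 then (N : ℤ)
          else if m.1 = N - 2 then ((N : ℤ) - 1) else (m.1 : ℤ)))).det +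
      (Matrix.of fun j m : Fin N =>
        ψ j n1 n2 (l1 + (if m.1 = N - 1 then ((N : ℤ) + 1) else (m.1 : ℤ)))).det) :
    ∀ n1 n2 l1 : ℤ,
      (2 * a1 * (f (n1 + 1) n2 l1 * g n1 n2 l1 - f n1 n2 l1 * g (n1 + 1) n2 l1) -
        2 * g n1 n2 l1 * g (n1 + 1) n2 l1 +
        h (n1 + 1) n2 l1 * f n1 n2 l1 + h n1 n2 l1 * f (n1 + 1) n2 l1 = 0) ∧
      (2 * a2 * (f n1 (n2 + 1) l1 * g n1 n2 l1 - f n1 n2 l1 * g n1 (n2 + 1) l1) -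
        2 * g n1 n2 l1 * g n1 (n2 + 1) l1 +
        h n1 (n2 + 1) l1 * f n1 n2 l1 + h n1 n2 l1 * f n1 (n2 + 1) l1 = 0) := by
  obtain ⟨n, rfl⟩ : ∃ n, N = n + 2 := ⟨N - 2, by omega⟩
  have hF : ∀ n1 n2 l1, f n1 n2 l1 = (casMat fun m j => ψ j n1 n2 (l1 + (m : ℤ))).det := hf
  have hG : ∀ n1 n2 l1, g n1 n2 l1 = (casMat fun m j => ψ j n1 n2 (l1 + (m : ℤ))).cramer
      (fun j => ψ j n1 n2 (l1 + ((n + 2 : ℕ) : ℤ))) (Fin.last (n + 1)) := by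
    intro n1 n2 l1
    rw [hg]
    exact det_last_col (fun m j => ψ j n1 n2 (l1 + (m : ℤ))) (fun l j => ψ j n1 n2 l) l1 _
      (n + 2) rfl fun m => rfl
  have hH : ∀ n1 n2 l1, h n1 n2 l1 =
      -(casMat fun m j => ψ j n1 n2 (l1 + (m : ℤ))).cramer
        (fun j => ψ j n1 n2 (l1 + ((n + 2 : ℕ) : ℤ))) (penult n) +
      (casMat fun m j => ψ j n1 n2 (l1 + (m : ℤ))).cramer
        (fun j => ψ j n1 n2 (l1 + ((n + 3 : ℕ) : ℤ))) (Fin.last (n + 1)) := by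
    intro n1 n2 l1
    rw [hh]
    exact congrArg₂ (· + ·)
      (det_penult_col (fun m j => ψ j n1 n2 (l1 + (m : ℤ))) (fun l j => ψ j n1 n2 l) l1
        fun m => rfl)
      (det_last_col (fun m j => ψ j n1 n2 (l1 + (m : ℤ))) (fun l j => ψ j n1 n2 l) l1 _
        (n + 3) (by push_cast; ring) fun m => rfl)
  have hk' : ∀ j, -k j ≠ 0 := fun j => neg_ne_zero.mpr (hk j)
  have hsq : ∀ j n1 n2 l, ψ j n1 n2 (l + 2) = k j ^ 2 * ψ j n1 n2 l := by
    intro j n1 n2 l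
    rw [hψ, hψ, zpow_add₀ (hk j), zpow_add₀ (hk' j), zpow_ofNat, zpow_ofNat]
    ring
  have hs1 : ∀ j n1 n2 l, ψ j (n1 + 1) n2 l = a1 * ψ j n1 n2 l + ψ j n1 n2 (l + 1) := by
    intro j n1 n2 l
    rw [hψ, hψ, hψ, zpow_add_one₀ (hk j), zpow_add_one₀ (hk' j), zpow_add_one₀ (ha1 j),
      zpow_add_one₀ (ha1' j)]
    ring
  have hs2 : ∀ j n1 n2 l, ψ j n1 (n2 + 1) l = a2 * ψ j n1 n2 l + ψ j n1 n2 (l + 1) := by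
    intro j n1 n2 l
    rw [hψ, hψ, hψ, zpow_add_one₀ (hk j), zpow_add_one₀ (hk' j), zpow_add_one₀ (ha2 j),
      zpow_add_one₀ (ha2' j)]
    ring
  intro n1 n2 l1
  have hv : ∀ m : ℕ, (fun j => ψ j n1 n2 (l1 + ((m + 2 : ℕ) : ℤ))) =
      (fun j => k j ^ 2) * fun j => ψ j n1 n2 (l1 + (m : ℤ)) := by
    intro m
    ext j
    rw [Pi.mul_apply, ← hsq]
    congr 1
    push_cast
    ring
  constructor
  · rw [hF, hF, hG, hG, hH, hH]
    refine casVec_bilinear (fun m j => ψ j n1 n2 (l1 + (m : ℤ)))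
      (fun m j => ψ j (n1 + 1) n2 (l1 + (m : ℤ))) (fun j => k j ^ 2) a1 hv fun m => ?_
    ext j
    simp only [hs1, Pi.add_apply, Pi.smul_apply, smul_eq_mul, Nat.cast_add, Nat.cast_one, add_assoc]
  · rw [hF, hF, hG, hG, hH, hH]
    refine casVec_bilinear (fun m j => ψ j n1 n2 (l1 + (m : ℤ)))
      (fun m j => ψ j n1 (n2 + 1) (l1 + (m : ℤ))) (fun j => k j ^ 2) a2 hv fun m => ?_
    ext j
    simp only [hs2, Pi.add_apply, Pi.smul_apply, smul_eq_mul, Nat.cast_add, Nat.cast_one, add_assoc]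
end

section
/- Let f(n1,n2,x) be the Wronskian in x of the vector ψ with entries ψ_j(n1,n2,x) = ρ_j^+ e^{k_j x}(a1+k_j)^{n1}(a2+k_j)^{n2} + ρ_j^- e^{−k_j x}(a1−k_j)^{n1}(a2−k_j)^{n2}. Then f satisfies the bilinear H2 system at every (n1,n2,x): (∂_x² f) f_1 − 2 (∂_x f)(∂_x f_1) + f (∂_x² f_1) + 2a1((∂_x f) f_1 − f (∂_x f_1)) = 0 and (∂_x² f) f_2 − 2 (∂_x f)(∂_x f_2) + f (∂_x² f_2) + 2a2((∂_x f) f_2 − f (∂_x f_2)) = 0, where f_1 = f(n1+1,n2,x) and f_2 = f(n1,n2+1,x). -/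
/-!
Write `w m` for the vector obtained from `ψ` by shifting the relevant lattice variable `m` times.
Each entry of `w m` is `c e^{kx} (a + k)^m + d e^{-kx} (a - k)^m`, so
`∂ₓ (w m) = w (m + 1) - a w m`, and `w (m + 2) - 2a w (m + 1) + a² w m = K w m` with
`K = diag (k_j²)`.

* The first relation shows that the Wronskian `f` equals the Casoratian `|0, 1, …, N - 1|`
  (`wronskian_eq_cas`), the columns being `w 0, …, w (N - 1)`, and hence that the lattice shift of
  `f` is `|1, …, N|`.
* Differentiation of a Casoratian raises one column index at a time
  (`hasDerivAt_cas`), so the first two derivatives of `f` are combinations of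
  `A = |0, …, N - 2, N|`, `X = |0, …, N - 2, N + 1|` and `Y = |0, …, N - 3, N - 1, N|`;
  similarly for the shift of `f`.
* Multiplying a determinant by `tr K` amounts to applying `K` to one column at a time
  (`trace_mul_det`); this expresses `X - Y` through `f` and `A`.

Eliminating `Y` for `f` and `X` for its shift, the bilinear equation becomes twice the three-term
Plücker relation for `w 0, w (N - 1), w N, w (N + 1)` relative to the common columns
`w 1, …, w (N - 2)` (`plucker`). For `N = 1` there are no two distinguished columns and the
identity is checked directly.
-/

open Matrix

/-! ### Casorati determinants -/

/-- The Casorati determinant whose `i`-th column is the vector `w (e i)`. -/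
noncomputable def cas {N : ℕ} (w : ℕ → Fin N → ℂ) (e : Fin N → ℕ) : ℂ :=
  (Matrix.of fun j i : Fin N => w (e i) j).det

/-- The column indices `s, s + 1, …, s + n - 1, p, q`. -/
def idx (n s p q : ℕ) (i : Fin (n + 2)) : ℕ :=
  if i.1 = n + 1 then q else if i.1 = n then p else i.1 + s

/-- The column indices `p, 1, …, n, q`. -/
def idxEnds (n p q : ℕ) (i : Fin (n + 2)) : ℕ :=
  if i.1 = 0 then p else if i.1 = n + 1 then q else i.1

theorem cas_eq_zero {N : ℕ} (w : ℕ → Fin N → ℂ) (e : Fin N → ℕ) {i i' : Fin N} (h : i ≠ i')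
    (he : e i = e i') : cas w e = 0 :=
  Matrix.det_zero_of_column_eq h (fun j => by simp [he])

theorem cas_update {N : ℕ} (w : ℕ → Fin N → ℂ) (e : Fin N → ℕ) (i : Fin N) (r : ℕ) :
    cas w (Function.update e i r) =
      ((Matrix.of fun j i : Fin N => w (e i) j).updateCol i (w r)).det := by
  unfold cas
  congr 1
  ext j l
  by_cases h : l = i
  · subst h; simp
  · simp [h]

/-! ### Replacing one column at a time: traces and derivatives -/

/-- The sum of the determinants obtained by replacing the columns of `A`, one at a time, by those
of `M * A` is `tr M · det A`: by Cramer's rule it is the trace of `adj A * (M * A)`. -/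
theorem trace_mul_det {N : ℕ} (A M : Matrix (Fin N) (Fin N) ℂ) :
    ∑ i, (A.updateCol i (fun j => (M * A) j i)).det = M.trace * A.det := by
  have h : ∀ i, (A.updateCol i (fun j => (M * A) j i)).det = (A.adjugate * (M * A)) i i := by
    intro i
    rw [← Matrix.cramer_apply, Matrix.cramer_eq_adjugate_mulVec]
    rfl
  simp_rw [h]
  change (A.adjugate * (M * A)).trace = _
  rw [← Matrix.mul_assoc, Matrix.trace_mul_comm, ← Matrix.mul_assoc, Matrix.mul_adjugate]
  simp [mul_comm]

/-- `tr K` times a Casoratian, when `K = diag κ` acts on the columns as the square of the operator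
raising the index by one and subtracting `a`. -/
theorem trace_cas {N : ℕ} (w : ℕ → Fin N → ℂ) (a : ℂ) (κ : Fin N → ℂ)
    (hK : ∀ m j, w (m + 2) j - 2 * a * w (m + 1) j + a ^ 2 * w m j = κ j * w m j)
    (e : Fin N → ℕ) :
    (∑ j, κ j) * cas w e = ∑ i, cas w (Function.update e i (e i + 2))
      - 2 * a * ∑ i, cas w (Function.update e i (e i + 1)) + N * a ^ 2 * cas w e := by
  have h := trace_mul_det (Matrix.of fun j i : Fin N => w (e i) j) (Matrix.diagonal κ)
  rw [Matrix.trace_diagonal] at h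
  change _ = _ * cas w e at h
  rw [← h, Finset.mul_sum, ← Finset.sum_sub_distrib]
  have hN : (N : ℂ) * a ^ 2 * cas w e = ∑ _i : Fin N, a ^ 2 * cas w e := by
    simp [mul_assoc]
  rw [hN, ← Finset.sum_add_distrib]
  refine Finset.sum_congr rfl fun i _ => ?_
  have hc : (fun j => (Matrix.diagonal κ * Matrix.of fun j i : Fin N => w (e i) j) j i)
      = w (e i + 2) + (-2 * a) • w (e i + 1) + a ^ 2 • w (e i) := by
    ext j
    rw [Matrix.diagonal_mul]
    simp only [Matrix.of_apply, Pi.add_apply, Pi.smul_apply, smul_eq_mul]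
    rw [← hK]; ring
  rw [hc, Matrix.det_updateCol_add, Matrix.det_updateCol_add, Matrix.det_updateCol_smul,
    Matrix.det_updateCol_smul, ← cas_update, ← cas_update, ← cas_update, Function.update_eq_self]
  ring

/-- The derivative of a determinant is obtained by differentiating one column at a time. -/
theorem hasDerivAt_det {N : ℕ} (A : ℝ → Matrix (Fin N) (Fin N) ℂ) (A' : Matrix (Fin N) (Fin N) ℂ)
    (x : ℝ) (h : ∀ i j, HasDerivAt (fun t => A t i j) (A' i j) x) :
    HasDerivAt (fun t => (A t).det) (∑ i, ((A x).updateCol i (fun j => A' j i)).det) x := by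
  simp only [Matrix.det_apply]
  rw [Finset.sum_comm]
  refine HasDerivAt.fun_sum fun σ _ => ?_
  rw [← Finset.smul_sum]
  simp only [Units.smul_def, zsmul_eq_mul]
  refine HasDerivAt.const_mul _ ?_
  have := HasDerivAt.fun_finsetProd (u := Finset.univ) (fun i _ => h (σ i) i)
  convert this using 1
  refine Finset.sum_congr rfl fun i _ => ?_
  rw [← Finset.mul_prod_erase _ _ (Finset.mem_univ i), smul_eq_mul, mul_comm]
  congr 1
  · refine Finset.prod_congr rfl fun l hl => ?_
    rw [Matrix.updateCol_ne (Finset.ne_of_mem_erase hl)]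
  · simp

theorem hasDerivAt_cas {N : ℕ} (w : ℕ → Fin N → ℝ → ℂ) (a : ℂ)
    (hw : ∀ m j x, HasDerivAt (w m j) (w (m + 1) j x - a * w m j x) x)
    (e : Fin N → ℕ) (x : ℝ) :
    HasDerivAt (fun t => cas (fun m j => w m j t) e)
      (∑ i, cas (fun m j => w m j x) (Function.update e i (e i + 1))
        - N * a * cas (fun m j => w m j x) e) x := by
  have h := hasDerivAt_det (fun t => Matrix.of fun j i : Fin N => w (e i) j t)
    (Matrix.of fun j i : Fin N => w (e i + 1) j x - a * w (e i) j x) x (fun j i => hw (e i) j x)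
  refine h.congr_deriv ?_
  symm
  have hN : (N : ℂ) * a * cas (fun m j => w m j x) e
      = ∑ _i : Fin N, a * cas (fun m j => w m j x) e := by
    simp [mul_assoc]
  rw [hN, ← Finset.sum_sub_distrib]
  refine Finset.sum_congr rfl fun i _ => ?_
  have hc : (fun j => (Matrix.of fun j i : Fin N => w (e i + 1) j x - a * w (e i) j x) j i)
      = (fun j => w (e i + 1) j x) + (-a) • (fun j => w (e i) j x) := by
    ext j
    simp; ring
  rw [hc, Matrix.det_updateCol_add, Matrix.det_updateCol_smul,
    ← cas_update (fun m j => w m j x), ← cas_update (fun m j => w m j x), Function.update_eq_self]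
  ring

/-! ### Casoratians with almost consecutive columns -/

/-- When raising any of the first `n` indices by `r` produces a repeated column, only the last two
columns contribute to the sum over all raised columns. -/
theorem sum_raise {n : ℕ} (w : ℕ → Fin (n + 2) → ℂ) (s p q r : ℕ)
    (h : ∀ i : Fin (n + 2), i.1 < n → ∃ i', i ≠ i' ∧ idx n s p q i' = idx n s p q i + r) :
    ∑ i, cas w (Function.update (idx n s p q) i (idx n s p q i + r)) =
      cas w (idx n s (p + r) q) + cas w (idx n s p (q + r)) := by
  rw [Fin.sum_univ_castSucc, Fin.sum_univ_castSucc, Finset.sum_eq_zero, zero_add]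
  · congr 2
    · ext i
      by_cases hi : i = (Fin.last n).castSucc
      · subst hi; simp [idx]
      · rw [Function.update_of_ne hi]
        have : i.1 ≠ n := fun h' => hi (Fin.ext h')
        simp [idx, this]
    · ext i
      by_cases hi : i = Fin.last (n + 1)
      · subst hi; simp [idx]
      · rw [Function.update_of_ne hi]
        have : i.1 ≠ n + 1 := fun h' => hi (Fin.ext h')
        simp [idx, this]
  · intro i _
    obtain ⟨i', hne, hi'⟩ := h i.castSucc.castSucc i.2
    refine cas_eq_zero w _ hne ?_
    rw [Function.update_self, Function.update_of_ne hne.symm, hi']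

theorem raise_one (n s q : ℕ) (i : Fin (n + 2)) (hi : i.1 < n) :
    ∃ i', i ≠ i' ∧ idx n s (s + n) q i' = idx n s (s + n) q i + 1 := by
  refine ⟨⟨i.1 + 1, by omega⟩, fun h => by simpa using congrArg Fin.val h, ?_⟩
  simp only [idx]
  split_ifs <;> omega

theorem raise_two (n s : ℕ) (i : Fin (n + 2)) (hi : i.1 < n) :
    ∃ i', i ≠ i' ∧ idx n s (s + n) (s + n + 1) i' = idx n s (s + n) (s + n + 1) i + 2 := by
  refine ⟨⟨i.1 + 2, by omega⟩, fun h => by simpa using congrArg Fin.val h, ?_⟩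
  simp only [idx]
  split_ifs <;> omega

theorem cas_idx_self {n : ℕ} (w : ℕ → Fin (n + 2) → ℂ) (s p : ℕ) : cas w (idx n s p p) = 0 := by
  refine cas_eq_zero w _ (i := (Fin.last n).castSucc) (i' := Fin.last (n + 1)) ?_ ?_
  · intro h; simpa using congrArg Fin.val h
  · simp [idx]

theorem cas_comp_perm {N : ℕ} (w : ℕ → Fin N → ℂ) (e : Fin N → ℕ) (σ : Equiv.Perm (Fin N)) :
    cas w (e ∘ σ) = (Equiv.Perm.sign σ : ℤ) * cas w e :=
  Matrix.det_permute' σ (Matrix.of fun j i : Fin N => w (e i) j)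

theorem cas_idx_swap {n : ℕ} (w : ℕ → Fin (n + 2) → ℂ) (s p q : ℕ) :
    cas w (idx n s q p) = - cas w (idx n s p q) := by
  have hne : (Fin.last n).castSucc ≠ Fin.last (n + 1) := by
    intro h; simpa using congrArg Fin.val h
  have h : idx n s q p = idx n s p q ∘ Equiv.swap (Fin.last n).castSucc (Fin.last (n + 1)) := by
    ext i
    by_cases h1 : i = (Fin.last n).castSucc
    · subst h1; simp [idx]
    · by_cases h2 : i = Fin.last (n + 1)
      · subst h2; simp [idx]
      · rw [Function.comp_apply, Equiv.swap_apply_of_ne_of_ne h1 h2]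
        have h1' : i.1 ≠ n := fun h' => h1 (Fin.ext h')
        have h2' : i.1 ≠ n + 1 := fun h' => h2 (Fin.ext h')
        simp [idx, h1', h2']
  rw [h, cas_comp_perm, Equiv.Perm.sign_swap hne]
  simp

/-! ### The Plücker relation -/

/-- The cycle `(0 1 ⋯ n)` moves the leading column `p` to the last but one place. Only its
independence of `p, q` matters: the three terms of the Plücker relation acquire the same sign. -/
theorem idx_eq_comp (n p q : ℕ) :
    idx n 1 p q = idxEnds n p q ∘ (Fin.cycleRange (Fin.last n).castSucc) := by
  ext i
  rcases lt_trichotomy i (Fin.last n).castSucc with h | h | h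
  · have h' : i.1 < n := h
    have h2 := Fin.coe_cycleRange_of_lt h
    rw [Function.comp_apply]
    simp only [idx, idxEnds, h2]
    simp only [Nat.add_eq_zero_iff, one_ne_zero, and_false, if_false]
    split_ifs <;> omega
  · subst h
    simp [idx, idxEnds]
  · have h' : n < i.1 := h
    rw [Function.comp_apply, Fin.cycleRange_of_gt h]
    simp only [idx, idxEnds]
    split_ifs <;> omega

/-- The three-term Plücker relation for the vectors `w p, w q, w r, w t` and the common columns
`w 1, …, w n`. It is Cramer's rule for the system with right-hand side `w r` and matrix
`[w p, w 1, …, w n, w q]`, substituted into a determinant containing the column `w r`. -/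
theorem plucker_ends {n : ℕ} (w : ℕ → Fin (n + 2) → ℂ) (p q r t : ℕ) :
    cas w (idxEnds n p q) * cas w (idxEnds n t r) =
      cas w (idxEnds n r q) * cas w (idxEnds n t p) +
      cas w (idxEnds n p r) * cas w (idxEnds n t q) := by
  set A : Matrix (Fin (n + 2)) (Fin (n + 2)) ℂ :=
    Matrix.of fun j i => w (idxEnds n p q i) j with hA
  set B : Matrix (Fin (n + 2)) (Fin (n + 2)) ℂ :=
    Matrix.of fun j i => w (idxEnds n t r i) j with hB
  have hl0 : (Fin.last (n + 1)) ≠ 0 := by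
    intro h; simpa using congrArg Fin.val h
  have upd_last : ∀ u v z, Function.update (idxEnds n u v) (Fin.last (n + 1)) z
      = idxEnds n u z := by
    intro u v z
    ext i
    by_cases hi : i = Fin.last (n + 1)
    · subst hi; simp [idxEnds]
    · rw [Function.update_of_ne hi]
      have : i.1 ≠ n + 1 := fun h' => hi (Fin.ext h')
      simp [idxEnds, this]
  have upd_zero : ∀ u v z, Function.update (idxEnds n u v) 0 z = idxEnds n z v := by
    intro u v z
    ext i
    by_cases hi : i = 0
    · subst hi; simp [idxEnds]
    · rw [Function.update_of_ne hi]
      have : i.1 ≠ 0 := fun h' => hi (Fin.ext h')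
      simp [idxEnds, this]
  have hcr : A.det • w r = A *ᵥ A.cramer (w r) := (Matrix.mulVec_cramer A (w r)).symm
  have hcol : ∀ z, (B.updateCol (Fin.last (n + 1)) (w z)).det = cas w (idxEnds n t z) := by
    intro z
    rw [hB, ← cas_update, upd_last]
  have hlin : ∀ y : Fin (n + 2) → ℂ,
      (B.updateCol (Fin.last (n + 1)) (A *ᵥ y)).det
        = ∑ i, y i * cas w (idxEnds n t (idxEnds n p q i)) := by
    intro y
    rw [← Matrix.cramer_apply, Matrix.mulVec_eq_sum, map_sum, Finset.sum_apply]
    refine Finset.sum_congr rfl fun i _ => ?_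
    rw [← hcol, ← Matrix.cramer_apply]
    simp only [op_smul_eq_smul, map_smul, Pi.smul_apply, smul_eq_mul]
    rfl
  have hL : cas w (idxEnds n p q) * cas w (idxEnds n t r)
      = (B.updateCol (Fin.last (n + 1)) (A.det • w r)).det := by
    rw [Matrix.det_updateCol_smul, hcol]
    rfl
  rw [hL, hcr, hlin, Fin.sum_univ_succ, Fin.sum_univ_castSucc, Finset.sum_eq_zero, zero_add,
    Matrix.cramer_apply, Matrix.cramer_apply, Fin.succ_last, hA, ← cas_update, ← cas_update,
    upd_zero, upd_last]
  · simp [idxEnds]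
  · -- A middle column `w (i + 1)` placed in the last slot repeats a common column.
    intro i _
    rw [cas_eq_zero w _ (i := i.castSucc.succ) (i' := Fin.last (n + 1)), mul_zero]
    · intro h
      have h1 := congrArg Fin.val h
      have h2 := i.2
      simp at h1
      omega
    · have h2 := i.2
      simp [idxEnds, h2.ne]

/-- The three-term Plücker relation for `w 0, w q, w r, w t`, with the columns of the factors not
containing `w 0` arranged in increasing order. -/
theorem plucker_s5 {n : ℕ} (w : ℕ → Fin (n + 2) → ℂ) (q r t : ℕ) :
    cas w (idxEnds n 0 t) * cas w (idx n 1 q r) - cas w (idxEnds n 0 r) * cas w (idx n 1 q t)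
      + cas w (idxEnds n 0 q) * cas w (idx n 1 r t) = 0 := by
  have h := plucker_ends w 0 t r q
  have h1 := cas_idx_swap w 1 0 q
  simp only [idx_eq_comp, cas_comp_perm] at h1 ⊢
  linear_combination
    ((Equiv.Perm.sign (Fin.cycleRange (Fin.last n).castSucc) : ℤ) : ℂ) * h
     + cas w (idxEnds n r t) * h1

theorem idx_zero_eq (n q : ℕ) : idx n 0 n q = idxEnds n 0 q := by
  ext i
  simp only [idx, idxEnds]
  split_ifs <;> omega

/-! ### Elementary solutions and the Wronskian -/

/-- The elementary solution with parameters `a, k`, after `m` steps of the lattice variable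
attached to `a`; the factors independent of `x` and `m` are absorbed in `c, d`. -/
noncomputable def wave (a k c d : ℂ) (m : ℕ) (x : ℝ) : ℂ :=
  c * Complex.exp (k * x) * (a + k) ^ m + d * Complex.exp (-k * x) * (a - k) ^ m

theorem hasDerivAt_cexp_mul (k : ℂ) (x : ℝ) :
    HasDerivAt (fun t : ℝ => Complex.exp (k * t)) (k * Complex.exp (k * x)) x := by
  have h := (((hasDerivAt_id (x : ℂ)).const_mul k).cexp).comp_ofReal
  simpa [mul_comm] using h

theorem hasDerivAt_wave (a k c d : ℂ) (m : ℕ) (x : ℝ) :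
    HasDerivAt (wave a k c d m) (wave a k c d (m + 1) x - a * wave a k c d m x) x := by
  have h := (((hasDerivAt_cexp_mul k x).const_mul c).mul_const ((a + k) ^ m)).add
    (((hasDerivAt_cexp_mul (-k) x).const_mul d).mul_const ((a - k) ^ m))
  refine h.congr_deriv ?_
  simp only [wave]
  ring

theorem wave_recurrence (a k c d : ℂ) (m : ℕ) (x : ℝ) :
    wave a k c d (m + 2) x - 2 * a * wave a k c d (m + 1) x + a ^ 2 * wave a k c d m x
      = k ^ 2 * wave a k c d m x := by
  simp only [wave]
  ring

theorem wave_add (a k c d : ℂ) (s m : ℕ) :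
    wave a k c d (s + m) = wave a k (c * (a + k) ^ s) (d * (a - k) ^ s) m := by
  ext x
  simp only [wave]
  ring

theorem iteratedDeriv_wave_zero (a k c d : ℂ) (i : ℕ) :
    iteratedDeriv i (wave a k c d 0) = wave a k (c * k ^ i) (d * (-k) ^ i) 0 := by
  induction i with
  | zero => simp
  | succ i ih =>
    rw [iteratedDeriv_succ, ih]
    ext x
    rw [(hasDerivAt_wave _ _ _ _ _ x).deriv]
    simp only [wave]
    ring

/-- The binomial expansion of `(∂ₓ + a) ^ m` applied to the unshifted wave. -/
theorem wave_eq_sum (a k c d : ℂ) (m M : ℕ) (hm : m < M) (x : ℝ) :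
    wave a k c d m x = ∑ i : Fin M,
      iteratedDeriv i.1 (wave a k c d 0) x * ((m.choose i.1 : ℂ) * a ^ (m - i.1)) := by
  rw [Fin.sum_univ_eq_sum_range
    (fun i => iteratedDeriv i (wave a k c d 0) x * ((m.choose i : ℂ) * a ^ (m - i)))]
  have hsub : Finset.range (m + 1) ⊆ Finset.range M := Finset.range_mono hm
  rw [← Finset.sum_subset hsub]
  · simp only [iteratedDeriv_wave_zero, wave, pow_zero, mul_one, sub_eq_add_neg a k, add_comm a, add_pow,
      Finset.mul_sum, ← Finset.sum_add_distrib]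
    refine Finset.sum_congr rfl fun i _ => ?_
    ring
  · intro i _ hi
    rw [Nat.choose_eq_zero_of_lt (by simpa using hi)]
    simp

/-- The Wronskian of the waves is their Casoratian: the two matrices differ by the unitriangular
matrix of binomial coefficients expressing `(∂ₓ + a) ^ m` through powers of `∂ₓ`. -/
theorem wronskian_eq_cas {N : ℕ} (a : ℂ) (k c d : Fin N → ℂ) (s : ℕ) (x : ℝ) :
    (Matrix.of fun j m : Fin N =>
      iteratedDeriv m.1 (wave a (k j) (c j) (d j) s) x).det =
    cas (fun m j => wave a (k j) (c j) (d j) m x) (fun i => i.1 + s) := by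
  set U : Matrix (Fin N) (Fin N) ℂ :=
    Matrix.of fun i m => (m.1.choose i.1 : ℂ) * a ^ (m.1 - i.1) with hU
  have hdet : U.det = 1 := by
    rw [Matrix.det_of_isUpperTriangular]
    · simp [hU]
    · intro i j hij
      have : j.1 < i.1 := hij
      simp [hU, Nat.choose_eq_zero_of_lt this]
  unfold cas
  rw [← mul_one (Matrix.det _), ← hdet, ← Matrix.det_mul]
  congr 1
  ext j m
  have h := wave_eq_sum a (k j) (c j * (a + k j) ^ s) (d j * (a - k j) ^ s) m.1 N m.2 x
  rw [← wave_add, ← wave_add, add_zero, add_comm s] at h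
  rw [Matrix.mul_apply]
  exact h.symm

/-! ### The bilinear equation -/

theorem hasDerivAt_cas_idx {n : ℕ} (w : ℕ → Fin (n + 2) → ℝ → ℂ) (a : ℂ)
    (hw : ∀ m j x, HasDerivAt (w m j) (w (m + 1) j x - a * w m j x) x) (s q : ℕ) (x : ℝ) :
    HasDerivAt (fun t => cas (fun m j => w m j t) (idx n s (s + n) q))
      (cas (fun m j => w m j x) (idx n s (s + n + 1) q) +
        cas (fun m j => w m j x) (idx n s (s + n) (q + 1))
        - (n + 2 : ℕ) * a * cas (fun m j => w m j x) (idx n s (s + n) q)) x := by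
  have h := hasDerivAt_cas w a hw (idx n s (s + n) q) x
  rwa [sum_raise _ _ _ _ _ (raise_one n s q)] at h

theorem trace_relation {n : ℕ} (w : ℕ → Fin (n + 2) → ℂ) (a : ℂ) (κ : Fin (n + 2) → ℂ)
    (hK : ∀ m j, w (m + 2) j - 2 * a * w (m + 1) j + a ^ 2 * w m j = κ j * w m j) (s : ℕ) :
    (∑ j, κ j) * cas w (idx n s (s + n) (s + n + 1)) =
      cas w (idx n s (s + n) (s + n + 3)) - cas w (idx n s (s + n + 1) (s + n + 2))
      - 2 * a * cas w (idx n s (s + n) (s + n + 2))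
      + (n + 2 : ℕ) * a ^ 2 * cas w (idx n s (s + n) (s + n + 1)) := by
  rw [trace_cas w a κ hK, sum_raise _ _ _ _ _ (raise_one n s _),
    sum_raise _ _ _ _ _ (raise_two n s), cas_idx_self, cas_idx_swap w s (s + n + 1)]
  ring

theorem idx_consecutive (n s : ℕ) :
    idx n s (s + n) (s + n + 1) = fun i => i.1 + s := by
  ext i
  simp only [idx]
  split_ifs <;> omega

/-- The bilinear equation for two Casoratians with consecutive columns. -/
theorem bilinear_cas {N : ℕ} (hN : 1 ≤ N) (w : ℕ → Fin N → ℝ → ℂ) (a : ℂ) (κ : Fin N → ℂ)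
    (hw : ∀ m j x, HasDerivAt (w m j) (w (m + 1) j x - a * w m j x) x)
    (hK : ∀ m j x, w (m + 2) j x - 2 * a * w (m + 1) j x + a ^ 2 * w m j x = κ j * w m j x)
    (f g : ℝ → ℂ) (hf : f = fun x => cas (fun m j => w m j x) (fun i => i.1 + 0))
    (hg : g = fun x => cas (fun m j => w m j x) (fun i => i.1 + 1)) (x : ℝ) :
    iteratedDeriv 2 f x * g x - 2 * deriv f x * deriv g x + f x * iteratedDeriv 2 g x +
      2 * a * (deriv f x * g x - f x * deriv g x) = 0 := by
  simp only [iteratedDeriv_succ, iteratedDeriv_zero]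
  obtain rfl | ⟨n, rfl⟩ : N = 1 ∨ ∃ n, N = n + 2 := by
    rcases N with _ | _ | n
    · omega
    · exact Or.inl rfl
    · exact Or.inr ⟨n, rfl⟩
  · have hf' : f = w 0 0 := by
      rw [hf]; ext x; simp [cas]
    have hg' : g = w 1 0 := by
      rw [hg]; ext x; simp [cas]
    have hd : ∀ m, deriv (w m 0) = fun x => w (m + 1) 0 x - a * w m 0 x :=
      fun m => funext fun x => (hw m 0 x).deriv
    have hd2 : ∀ m, deriv (deriv (w m 0)) x = w (m + 2) 0 x - a * w (m + 1) 0 x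
        - a * (w (m + 1) 0 x - a * w m 0 x) := by
      intro m
      rw [hd m]
      exact ((hw (m + 1) 0 x).sub ((hw m 0 x).const_mul a)).deriv
    rw [hf', hg', hd2, hd2, hd, hd]
    have h0 := hK 0 0 x
    have h1 := hK 1 0 x
    simp only [zero_add, Nat.reduceAdd] at h0 h1 ⊢
    linear_combination w 0 0 x * h1 - w 1 0 x * h0
  · have key : ∀ (s : ℕ) (F : ℝ → ℂ),
        F = (fun x => cas (fun m j => w m j x) (fun i => i.1 + s)) →
        deriv F x = cas (fun m j => w m j x) (idx n s (s + n) (s + n + 2))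
          - (n + 2 : ℕ) * a * F x ∧
        deriv (deriv F) x = cas (fun m j => w m j x) (idx n s (s + n) (s + n + 3))
          + cas (fun m j => w m j x) (idx n s (s + n + 1) (s + n + 2))
          - 2 * ((n + 2 : ℕ) * a) * cas (fun m j => w m j x) (idx n s (s + n) (s + n + 2))
          + ((n + 2 : ℕ) * a) ^ 2 * F x ∧
        (∑ j, κ j) * F x = cas (fun m j => w m j x) (idx n s (s + n) (s + n + 3))
          - cas (fun m j => w m j x) (idx n s (s + n + 1) (s + n + 2))
          - 2 * a * cas (fun m j => w m j x) (idx n s (s + n) (s + n + 2))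
          + (n + 2 : ℕ) * a ^ 2 * F x := by
      intro s F hF
      rw [← idx_consecutive] at hF
      have hD : ∀ x, HasDerivAt F (cas (fun m j => w m j x) (idx n s (s + n) (s + n + 2))
          - (n + 2 : ℕ) * a * F x) x := by
        intro x
        have h := hasDerivAt_cas_idx w a hw s (s + n + 1) x
        rw [cas_idx_self, zero_add] at h
        rw [hF]
        exact h
      refine ⟨(hD x).deriv, ?_, ?_⟩
      · rw [show deriv F = _ from funext fun x => (hD x).deriv]
        refine ((hasDerivAt_cas_idx w a hw s (s + n + 2) x).sub
          ((hD x).const_mul _)).deriv.trans ?_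
        ring
      · rw [hF]
        exact trace_relation _ a κ (fun m j => hK m j x) s
    obtain ⟨f1, f2, f3⟩ := key 0 f hf
    obtain ⟨g1, g2, g3⟩ := key 1 g hg
    have hfx : f x = cas (fun m j => w m j x) (idxEnds n 0 (n + 1)) := by
      rw [hf, ← idx_zero_eq]
      have := idx_consecutive n 0
      simp only [zero_add] at this
      rw [this]
    have hgx : g x = cas (fun m j => w m j x) (idx n 1 (n + 1) (n + 2)) := by
      rw [hg, ← idx_consecutive n 1, add_comm 1 n]
    -- The four vectors of the Plücker relation are `w 0, w (N - 1), w N, w (N + 1)`, `N = n + 2`.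
    have hP := plucker_s5 (fun m j => w m j x) (n + 1) (n + 2) (n + 3)
    rw [← hfx, ← hgx] at hP
    simp only [zero_add, idx_zero_eq] at f1 f2 f3
    simp only [show 1 + n = n + 1 from add_comm 1 n, Nat.add_assoc, Nat.reduceAdd]
      at g1 g2 g3 hP f1 f2 f3
    rw [f1, f2, g1, g2]
    -- The two trace identities eliminate `Y` from `f''` and `X` from `g''`.
    linear_combination 2 * hP + g x * f3 - f x * g3

theorem stmt_5 (N : ℕ) (hN : 1 ≤ N) (a1 a2 : ℂ) (k ρp ρm : Fin N → ℂ)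
    (ha1 : ∀ j, a1 + k j ≠ 0) (ha1' : ∀ j, a1 - k j ≠ 0)
    (ha2 : ∀ j, a2 + k j ≠ 0) (ha2' : ∀ j, a2 - k j ≠ 0)
    (ψ : Fin N → ℤ → ℤ → ℝ → ℂ)
    (hψ : ∀ j n1 n2 x, ψ j n1 n2 x =
      ρp j * Complex.exp (k j * (x : ℂ)) * (a1 + k j) ^ n1 * (a2 + k j) ^ n2 +
      ρm j * Complex.exp (-(k j) * (x : ℂ)) * (a1 - k j) ^ n1 * (a2 - k j) ^ n2)
    (f : ℤ → ℤ → ℝ → ℂ)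
    (hf : ∀ n1 n2 x, f n1 n2 x =
      (Matrix.of fun j m : Fin N => iteratedDeriv m.1 (fun t => ψ j n1 n2 t) x).det) :
    ∀ n1 n2 : ℤ, ∀ x : ℝ,
      (iteratedDeriv 2 (fun t => f n1 n2 t) x * f (n1 + 1) n2 x -
        2 * deriv (fun t => f n1 n2 t) x * deriv (fun t => f (n1 + 1) n2 t) x +
        f n1 n2 x * iteratedDeriv 2 (fun t => f (n1 + 1) n2 t) x +
        2 * a1 * (deriv (fun t => f n1 n2 t) x * f (n1 + 1) n2 x -
          f n1 n2 x * deriv (fun t => f (n1 + 1) n2 t) x) = 0) ∧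
      (iteratedDeriv 2 (fun t => f n1 n2 t) x * f n1 (n2 + 1) x -
        2 * deriv (fun t => f n1 n2 t) x * deriv (fun t => f n1 (n2 + 1) t) x +
        f n1 n2 x * iteratedDeriv 2 (fun t => f n1 (n2 + 1) t) x +
        2 * a2 * (deriv (fun t => f n1 n2 t) x * f n1 (n2 + 1) x -
          f n1 n2 x * deriv (fun t => f n1 (n2 + 1) t) x) = 0) := by
  have hw : ∀ (a : ℂ) (c d : Fin N → ℂ) (m : ℕ) (j : Fin N) (x : ℝ),
      HasDerivAt (wave a (k j) (c j) (d j) m)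
        (wave a (k j) (c j) (d j) (m + 1) x - a * wave a (k j) (c j) (d j) m x) x :=
    fun a c d m j x => hasDerivAt_wave a (k j) (c j) (d j) m x
  have hK := fun (a : ℂ) (c d : Fin N → ℂ) (m : ℕ) (j : Fin N) (x : ℝ) =>
    wave_recurrence a (k j) (c j) (d j) m x
  intro n1 n2 x
  constructor
  · set c : Fin N → ℂ := fun j => ρp j * (a1 + k j) ^ n1 * (a2 + k j) ^ n2 with hc
    set d : Fin N → ℂ := fun j => ρm j * (a1 - k j) ^ n1 * (a2 - k j) ^ n2 with hd
    have h0 : ∀ j, (fun t => ψ j n1 n2 t) = wave a1 (k j) (c j) (d j) 0 := by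
      intro j; ext t
      rw [hψ]; simp only [wave, hc, hd]; ring
    have h1 : ∀ j, (fun t => ψ j (n1 + 1) n2 t) = wave a1 (k j) (c j) (d j) 1 := by
      intro j; ext t
      rw [hψ, zpow_add_one₀ (ha1 j), zpow_add_one₀ (ha1' j)]; simp only [wave, hc, hd]; ring
    refine bilinear_cas hN (fun m j => wave a1 (k j) (c j) (d j) m) a1 (fun j => k j ^ 2)
      (hw a1 c d) (hK a1 c d) _ _ ?_ ?_ x
    · ext t
      rw [hf, ← wronskian_eq_cas]; simp only [h0]
    · ext t
      rw [hf, ← wronskian_eq_cas]; simp only [h1]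
  · set c : Fin N → ℂ := fun j => ρp j * (a1 + k j) ^ n1 * (a2 + k j) ^ n2 with hc
    set d : Fin N → ℂ := fun j => ρm j * (a1 - k j) ^ n1 * (a2 - k j) ^ n2 with hd
    have h0 : ∀ j, (fun t => ψ j n1 n2 t) = wave a2 (k j) (c j) (d j) 0 := by
      intro j; ext t
      rw [hψ]; simp only [wave, hc, hd]; ring
    have h1 : ∀ j, (fun t => ψ j n1 (n2 + 1) t) = wave a2 (k j) (c j) (d j) 1 := by
      intro j; ext t
      rw [hψ, zpow_add_one₀ (ha2 j), zpow_add_one₀ (ha2' j)]; simp only [wave, hc, hd]; ring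
    refine bilinear_cas hN (fun m j => wave a2 (k j) (c j) (d j) m) a2 (fun j => k j ^ 2)
      (hw a2 c d) (hK a2 c d) _ _ ?_ ?_ x
    · ext t
      rw [hf, ← wronskian_eq_cas]; simp only [h0]
    · ext t
      rw [hf, ← wronskian_eq_cas]; simp only [h1]
end

section
/- Let f(n1,n2,n3) be the Casoratian in the direction n_λ (for any fixed λ ∈ {1,2,3}) of the vector ψ with entries ψ_j(n1,n2,n3) = ρ_j^+ ∏_{i=1}^3 (a_i+k_j)^{n_i} + ρ_j^- ∏_{i=1}^3 (a_i−k_j)^{n_i}. Then f satisfies the first bilinear H3 system at every point: (a2+a3) f_12 f_3 + (a1−a3) f f_123 − (a1+a2) f_1 f_23 = 0; (a3−a2) f_12 f^3 − (a1+a3) f f_12^3 + (a1+a2) f_1 f_2^3 = 0; and 2a3(a1−a2) f f_12 + (a3−a1)(a2+a3) f_13 f_2^3 + (a1+a3)(a2−a3) f_23 f_1^3 = 0. -/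
/-!
The entry `ψ_j` at the lattice point `n` with an extra polynomial weight `p` is the linear functional
`v_j(p) = ρ_j^+ W(k_j) p(k_j) + ρ_j^- W(-k_j) p(-k_j)` on `ℂ[X]`, where `W(x) = ∏ (a_i + x)^{n_i}`.
The columns of the Casoratian in the direction `n_λ` are `v((X + a_λ)^m)`; as `(X + a_λ)^m` is monic
of degree `m`, the Casoratian equals `det (v_j(X^m))` whatever `λ` is (`casDet_monic`).

The shift of `n_i` by `+1` multiplies the argument of `v` by `X + a_i`. Since `v_j` only sees the
points `±k_j`, multiplication by `X - a_i` is the shift of `n_i` by `-1`, up to the nonzero factor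
`k_j ^ 2 - a_i ^ 2` in row `j`. Thus the three equations are statements about the determinants
`F_{st} = det (v_j((X + s)(X + t) X^m))` and `F_s = det (v_j((X + s) X^m))`.

To get these, extend the `N` functionals by two more to an `(N + 2) × (N + 2)` determinant. Adding
the evaluations at `-s` and `-t` gives `(s - t) F_{st}`; adding the evaluation at `-s` and the top
coefficient gives `± F_s`. The Plücker relation `plucker` for two extra rows, a consequence of
Cramer's rule, then gives the four-parameter identity `four_term` and its limit `three_term` when one
parameter goes to infinity. The first two equations are `three_term` with the parameters
`(a1, -a2, a3)` and `(a1, -a2, -a3)`, based at the point shifted by one in the direction `n2`; the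
third is `four_term` with the parameters `(a1, a2, a3, -a3)`.
-/

open Polynomial in
/-- The determinant of the functionals `L i` on the monomials `1, X, …, X ^ (n - 1)`. -/
noncomputable def casDet {n : ℕ} (L : Fin n → (ℂ[X] →ₗ[ℂ] ℂ)) : ℂ :=
  (Matrix.of fun i j : Fin n => L i (X ^ (j : ℕ))).det

open Polynomial in
/-- Precomposition of every functional with multiplication by `X + t`. -/
noncomputable def mulShift (t : ℂ) {n : ℕ} (L : Fin n → (ℂ[X] →ₗ[ℂ] ℂ)) :
    Fin n → (ℂ[X] →ₗ[ℂ] ℂ) :=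
  fun i => L i ∘ₗ LinearMap.mulLeft ℂ (X + C t)

open Polynomial in
/-- Evaluation at `-t`, the functional that vanishes on the multiples of `X + t`. -/
noncomputable def evalNeg (t : ℂ) : ℂ[X] →ₗ[ℂ] ℂ := Polynomial.leval (-t)

open Polynomial in
/-- Monomials may be replaced by any monic polynomials of the same degrees, the change of basis being
unitriangular. -/
lemma casDet_monic {n : ℕ} (L : Fin n → (ℂ[X] →ₗ[ℂ] ℂ)) (p : Fin n → ℂ[X])
    (hd : ∀ i, (p i).natDegree = i) (hm : ∀ i, (p i).Monic) :
    (Matrix.of fun i j : Fin n => L i (p j)).det = casDet L := by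
  have h : (Matrix.of fun i j : Fin n => L i (p j)) =
      (Matrix.of fun i j : Fin n => L i (X ^ (j : ℕ))) *
        (Matrix.of fun i j : Fin n => (p j).coeff i) := by
    ext i j
    rw [Matrix.mul_apply]
    have hp : p j = ∑ c : Fin n, (p j).coeff c • (X : ℂ[X]) ^ (c : ℕ) := by
      rw [Fin.sum_univ_eq_sum_range (fun c => (p j).coeff c • (X : ℂ[X]) ^ c) n]
      conv_lhs => rw [(p j).as_sum_range' n (by rw [hd]; exact j.2)]
      simp only [smul_eq_C_mul, C_mul_X_pow_eq_monomial]
    conv_lhs => rw [Matrix.of_apply, hp, map_sum]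
    simp [mul_comm]
  rw [h, Matrix.det_mul, Matrix.det_matrixOfPolynomials p hd hm, mul_one, casDet]

lemma casDet_smul {n : ℕ} (c : Fin n → ℂ) (L : Fin n → (Polynomial ℂ →ₗ[ℂ] ℂ)) :
    casDet (fun i => c i • L i) = (∏ i, c i) * casDet L := by
  simp only [casDet]
  exact Matrix.det_mul_column c _

lemma mulShift_smul (t : ℂ) {n : ℕ} (c : Fin n → ℂ) (L : Fin n → (Polynomial ℂ →ₗ[ℂ] ℂ)) :
    mulShift t (fun i => c i • L i) = fun i => c i • mulShift t L i := by
  funext i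
  simp [mulShift, LinearMap.smul_comp]

lemma mulShift_cons (t : ℂ) {n : ℕ} (e : Polynomial ℂ →ₗ[ℂ] ℂ)
    (L : Fin n → (Polynomial ℂ →ₗ[ℂ] ℂ)) :
    mulShift t (Fin.cons e L : Fin (n + 1) → (Polynomial ℂ →ₗ[ℂ] ℂ)) =
      Fin.cons (e ∘ₗ LinearMap.mulLeft ℂ (Polynomial.X + Polynomial.C t)) (mulShift t L) := by
  funext i
  refine Fin.cases ?_ (fun i => ?_) i <;> simp [mulShift]

open Polynomial in
/-- An extra evaluation at `-t` amounts to restricting the other functionals to the multiples of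
`X + t`: expand along the first row in the basis `1, X + t, (X + t) X, …`. -/
lemma casDet_cons_evalNeg (t : ℂ) {n : ℕ} (L : Fin n → (ℂ[X] →ₗ[ℂ] ℂ)) :
    casDet (Fin.cons (evalNeg t) L : Fin (n + 1) → (ℂ[X] →ₗ[ℂ] ℂ)) = casDet (mulShift t L) := by
  let p : Fin (n + 1) → ℂ[X] := Fin.cons 1 (fun m : Fin n => (X + C t) * X ^ (m : ℕ))
  rw [← casDet_monic _ p]
  · rw [Matrix.det_succ_row_zero, Fin.sum_univ_succ, Finset.sum_eq_zero]
    · simp [p, evalNeg, casDet, mulShift, Matrix.submatrix]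
    · intro i _
      simp [p, evalNeg]
  · intro i
    refine Fin.cases ?_ (fun i => ?_) i
    · simp [p]
    · simp only [p, Fin.cons_succ]
      rw [(monic_X_add_C t).natDegree_mul (monic_X_pow _)]
      simp [add_comm]
  · intro i
    refine Fin.cases ?_ (fun i => ?_) i
    · simp [p]
    · simp only [p, Fin.cons_succ]
      exact (monic_X_add_C t).mul (monic_X_pow _)

open Polynomial in
/-- A functional that reads off the top coefficient can be removed together with the top monomial. -/
lemma casDet_cons_top {n : ℕ} (e : ℂ[X] →ₗ[ℂ] ℂ)
    (he : ∀ j : Fin (n + 1), e (X ^ (j : ℕ)) = if (j : ℕ) = n then 1 else 0)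
    (L : Fin n → (ℂ[X] →ₗ[ℂ] ℂ)) :
    casDet (Fin.cons e L : Fin (n + 1) → (ℂ[X] →ₗ[ℂ] ℂ)) = (-1) ^ n * casDet L := by
  rw [casDet, Matrix.det_succ_row_zero, Fin.sum_univ_castSucc, Finset.sum_eq_zero]
  · have h := he (Fin.last n)
    simp only [Fin.val_last, if_true] at h
    simp [casDet, h, Matrix.submatrix]
  · intro i _
    have h := he i.castSucc
    simp only [Fin.val_castSucc, i.2.ne, if_false] at h
    simp [h]

open Polynomial in
lemma casDet_cons_cons_evalNeg (s t : ℂ) {n : ℕ} (L : Fin n → (ℂ[X] →ₗ[ℂ] ℂ)) :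
    casDet (Fin.cons (evalNeg s) (Fin.cons (evalNeg t) L : Fin (n + 1) → (ℂ[X] →ₗ[ℂ] ℂ)) :
      Fin (n + 2) → (ℂ[X] →ₗ[ℂ] ℂ)) = (s - t) * casDet (mulShift t (mulShift s L)) := by
  rw [casDet_cons_evalNeg, mulShift_cons]
  have h : (Fin.cons (evalNeg t ∘ₗ LinearMap.mulLeft ℂ (X + C s)) (mulShift s L) :
      Fin (n + 1) → (ℂ[X] →ₗ[ℂ] ℂ)) = fun i => (Fin.cons (s - t) (fun _ => 1) : Fin (n + 1) → ℂ) i •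
        (Fin.cons (evalNeg t) (mulShift s L) : Fin (n + 1) → (ℂ[X] →ₗ[ℂ] ℂ)) i := by
    funext i
    refine Fin.cases ?_ (fun i => ?_) i
    · refine LinearMap.ext fun p => ?_
      simp only [evalNeg, LinearMap.comp_apply, LinearMap.mulLeft_apply, leval_apply, eval_mul,
        eval_add, eval_X, eval_C, Fin.cons_zero, LinearMap.smul_apply, smul_eq_mul]
      ring
    · simp
  rw [h, casDet_smul, casDet_cons_evalNeg, Fin.prod_univ_succ]
  simp

open Polynomial in
/-- The limiting case of `casDet_cons_cons_evalNeg` in which the second evaluation point is at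
infinity. -/
lemma casDet_cons_cons_top (s : ℂ) {n : ℕ} (L : Fin n → (ℂ[X] →ₗ[ℂ] ℂ)) :
    casDet (Fin.cons (evalNeg s) (Fin.cons (lcoeff ℂ (n + 1)) L : Fin (n + 1) → (ℂ[X] →ₗ[ℂ] ℂ)) :
      Fin (n + 2) → (ℂ[X] →ₗ[ℂ] ℂ)) = (-1) ^ n * casDet (mulShift s L) := by
  rw [casDet_cons_evalNeg, mulShift_cons, casDet_cons_top]
  intro j
  have h : n + 1 ≠ (j : ℕ) := by omega
  simp [add_mul, coeff_X_pow, h, eq_comm]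

/-- The determinant of the matrix with rows `x, y` followed by the rows of `V`. -/
noncomputable def det2 {n : ℕ} (V : Fin n → Fin (n + 2) → ℂ) (x y : Fin (n + 2) → ℂ) : ℂ :=
  (Matrix.of (Fin.cons x (Fin.cons y V : Fin (n + 1) → Fin (n + 2) → ℂ) :
    Fin (n + 2) → Fin (n + 2) → ℂ)).det

/-- The three-term Plücker relation: by Cramer's rule `det2 V x y • z` is a combination of `x`, `y`
and the rows of `V`; apply `det2 V · w` to it. -/
lemma plucker_s7 {n : ℕ} (V : Fin n → Fin (n + 2) → ℂ) (x y z w : Fin (n + 2) → ℂ) :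
    det2 V x y * det2 V z w - det2 V x z * det2 V y w + det2 V x w * det2 V y z = 0 := by
  let A : Matrix (Fin (n + 2)) (Fin (n + 2)) ℂ :=
    Matrix.of (Fin.cons x (Fin.cons y V : Fin (n + 1) → Fin (n + 2) → ℂ) :
      Fin (n + 2) → Fin (n + 2) → ℂ)
  let M : Matrix (Fin (n + 2)) (Fin (n + 2)) ℂ :=
    Matrix.of (Fin.cons x (Fin.cons w V : Fin (n + 1) → Fin (n + 2) → ℂ) :
      Fin (n + 2) → Fin (n + 2) → ℂ)
  let φ : (Fin (n + 2) → ℂ) →ₗ[ℂ] ℂ :=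
    (Matrix.detRowAlternating (R := ℂ) (n := Fin (n + 2))).toMultilinearMap.toLinearMap M 0
  have hφ : ∀ u, φ u = det2 V u w := by
    intro u
    change Matrix.det (Function.update M 0 u) = _
    unfold det2
    congr 1
    exact Fin.update_cons_zero (α := fun _ => Fin (n + 2) → ℂ) x _ u
  have hφV : ∀ i, φ (V i) = 0 := by
    intro i
    rw [hφ]
    refine Matrix.det_zero_of_row_eq (i := 0) (j := i.succ.succ) (Fin.succ_ne_zero _).symm ?_
    rfl
  have hc := Matrix.mulVec_cramer A.transpose z
  have hsum : A.det • z = ∑ i, (A.updateRow i z).det • A i := by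
    rw [← A.det_transpose, ← hc]
    ext c
    simp [Matrix.mulVec, dotProduct, Matrix.cramer_transpose_apply, mul_comm]
  have h := congrArg φ hsum
  rw [map_sum, Fin.sum_univ_succ, Fin.sum_univ_succ, Finset.sum_eq_zero] at h
  · have e0 : (A.updateRow 0 z).det = det2 V z y := by
      unfold det2
      congr 1
      exact Fin.update_cons_zero (α := fun _ => Fin (n + 2) → ℂ) x _ z
    have e1 : (A.updateRow (Fin.succ 0) z).det = det2 V x z := by
      unfold det2
      congr 1
      change Function.update (Fin.cons x (Fin.cons y V : Fin (n + 1) → Fin (n + 2) → ℂ) :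
        Fin (n + 2) → Fin (n + 2) → ℂ) (Fin.succ 0) z = _
      rw [← Fin.cons_update, Fin.update_cons_zero]
      rfl
    have e2 : det2 V z y = - det2 V y z := by
      have h := (Matrix.detRowAlternating (R := ℂ) (n := Fin (n + 2))).map_swap
        (Fin.cons y (Fin.cons z V : Fin (n + 1) → Fin (n + 2) → ℂ) :
          Fin (n + 2) → Fin (n + 2) → ℂ) (i := 0) (j := 1) (by simp)
      unfold det2
      refine Eq.trans ?_ h
      change Matrix.det _ = Matrix.det _
      congr 1
      funext i
      refine Fin.cases ?_ (fun i => Fin.cases ?_ (fun i => ?_) i) i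
      · simp; rfl
      · simp; rfl
      · have : Equiv.swap (0 : Fin (n + 2)) 1 i.succ.succ = i.succ.succ :=
          Equiv.swap_apply_of_ne_of_ne (Fin.succ_ne_zero _)
            (fun h => Fin.succ_ne_zero i (Fin.succ_injective _ h))
        simp [this]; rfl
    have a0 : A 0 = x := rfl
    have a1 : A (Fin.succ 0) = y := rfl
    have aA : A.det = det2 V x y := rfl
    simp only [e0, e1, e2, a0, a1, aA, map_smul, smul_eq_mul] at h
    simp only [hφ] at h
    linear_combination h
  · intro i _
    have : A i.succ.succ = V i := rfl
    rw [map_smul, this, hφV, smul_zero]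

/-- The Plücker relation with functionals as rows. -/
lemma plucker_casDet {n : ℕ} (L : Fin n → (Polynomial ℂ →ₗ[ℂ] ℂ))
    (x y z w : Polynomial ℂ →ₗ[ℂ] ℂ) (d : (Polynomial ℂ →ₗ[ℂ] ℂ) → (Polynomial ℂ →ₗ[ℂ] ℂ) → ℂ)
    (hd : d = fun x y => casDet (Fin.cons x (Fin.cons y L : Fin (n + 1) → (Polynomial ℂ →ₗ[ℂ] ℂ)) :
      Fin (n + 2) → (Polynomial ℂ →ₗ[ℂ] ℂ))) :
    d x y * d z w - d x z * d y w + d x w * d y z = 0 := by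
  let r : (Polynomial ℂ →ₗ[ℂ] ℂ) → Fin (n + 2) → ℂ := fun e j => e (Polynomial.X ^ (j : ℕ))
  have h : ∀ x y, d x y = det2 (fun i => r (L i)) (r x) (r y) := by
    intro x y
    rw [hd]
    unfold det2
    simp only [casDet]
    congr 1
    ext i j
    refine Fin.cases ?_ (fun i => Fin.cases ?_ (fun i => ?_) i) i <;> simp [r]
  simp only [h]
  exact plucker_s7 _ _ _ _ _

/-- The Plücker relation for four evaluations. -/
lemma four_term {n : ℕ} (L : Fin n → (Polynomial ℂ →ₗ[ℂ] ℂ)) (s t u v : ℂ) :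
    (s - t) * casDet (mulShift t (mulShift s L)) * ((u - v) * casDet (mulShift v (mulShift u L))) -
      (s - u) * casDet (mulShift u (mulShift s L)) * ((t - v) * casDet (mulShift v (mulShift t L))) +
      (s - v) * casDet (mulShift v (mulShift s L)) * ((t - u) * casDet (mulShift u (mulShift t L)))
      = 0 := by
  simp only [← casDet_cons_cons_evalNeg]
  exact plucker_casDet L (evalNeg s) (evalNeg t) (evalNeg u) (evalNeg v) _ rfl

/-- The Plücker relation for three evaluations and the top coefficient. -/
lemma three_term {n : ℕ} (L : Fin n → (Polynomial ℂ →ₗ[ℂ] ℂ)) (s t u : ℂ) :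
    (s - t) * casDet (mulShift t (mulShift s L)) * casDet (mulShift u L) -
      (s - u) * casDet (mulShift u (mulShift s L)) * casDet (mulShift t L) +
      (t - u) * casDet (mulShift u (mulShift t L)) * casDet (mulShift s L) = 0 := by
  have h := plucker_casDet L (evalNeg s) (evalNeg t) (evalNeg u) (Polynomial.lcoeff ℂ (n + 1)) _ rfl
  simp only [casDet_cons_cons_evalNeg, casDet_cons_cons_top] at h
  have h1 : ((-1 : ℂ) ^ n) ≠ 0 := pow_ne_zero _ (by norm_num)
  refine (mul_eq_zero.mp ?_).resolve_left h1
  linear_combination h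

/-- The functional `p ↦ r W(κ) p(κ) + r' W(-κ) p(-κ)`, where `W(x) = ∏ (a_i + x)^{n_i}`. -/
noncomputable def waveFun (a1 a2 a3 κ r r' : ℂ) (n1 n2 n3 : ℤ) : Polynomial ℂ →ₗ[ℂ] ℂ :=
  (r * (a1 + κ) ^ n1 * (a2 + κ) ^ n2 * (a3 + κ) ^ n3) • Polynomial.leval κ +
    (r' * (a1 - κ) ^ n1 * (a2 - κ) ^ n2 * (a3 - κ) ^ n3) • Polynomial.leval (-κ)

theorem stmt_7 (N : ℕ) (hN : 1 ≤ N) (a1 a2 a3 : ℂ) (k ρp ρm : Fin N → ℂ)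
    (ha1 : ∀ j, a1 + k j ≠ 0) (ha1' : ∀ j, a1 - k j ≠ 0)
    (ha2 : ∀ j, a2 + k j ≠ 0) (ha2' : ∀ j, a2 - k j ≠ 0)
    (ha3 : ∀ j, a3 + k j ≠ 0) (ha3' : ∀ j, a3 - k j ≠ 0)
    (ψ : Fin N → ℤ → ℤ → ℤ → ℂ)
    (hψ : ∀ j n1 n2 n3, ψ j n1 n2 n3 =
      ρp j * (a1 + k j) ^ n1 * (a2 + k j) ^ n2 * (a3 + k j) ^ n3 +
      ρm j * (a1 - k j) ^ n1 * (a2 - k j) ^ n2 * (a3 - k j) ^ n3)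
    (f : ℤ → ℤ → ℤ → ℂ)
    (hf : (∀ n1 n2 n3, f n1 n2 n3 =
            (Matrix.of fun j m : Fin N => ψ j (n1 + (m.1 : ℤ)) n2 n3).det) ∨
          (∀ n1 n2 n3, f n1 n2 n3 =
            (Matrix.of fun j m : Fin N => ψ j n1 (n2 + (m.1 : ℤ)) n3).det) ∨
          (∀ n1 n2 n3, f n1 n2 n3 =
            (Matrix.of fun j m : Fin N => ψ j n1 n2 (n3 + (m.1 : ℤ))).det)) :
    ∀ n1 n2 n3 : ℤ,
      ((a2 + a3) * f (n1 + 1) (n2 + 1) n3 * f n1 n2 (n3 + 1) +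
        (a1 - a3) * f n1 n2 n3 * f (n1 + 1) (n2 + 1) (n3 + 1) -
        (a1 + a2) * f (n1 + 1) n2 n3 * f n1 (n2 + 1) (n3 + 1) = 0) ∧
      ((a3 - a2) * f (n1 + 1) (n2 + 1) n3 * f n1 n2 (n3 - 1) -
        (a1 + a3) * f n1 n2 n3 * f (n1 + 1) (n2 + 1) (n3 - 1) +
        (a1 + a2) * f (n1 + 1) n2 n3 * f n1 (n2 + 1) (n3 - 1) = 0) ∧
      (2 * a3 * (a1 - a2) * f n1 n2 n3 * f (n1 + 1) (n2 + 1) n3 +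
        (a3 - a1) * (a2 + a3) * f (n1 + 1) n2 (n3 + 1) * f n1 (n2 + 1) (n3 - 1) +
        (a1 + a3) * (a2 - a3) * f n1 (n2 + 1) (n3 + 1) * f (n1 + 1) n2 (n3 - 1) = 0) := by
  let v : ℤ → ℤ → ℤ → Fin N → (Polynomial ℂ →ₗ[ℂ] ℂ) := fun n1 n2 n3 j =>
    waveFun a1 a2 a3 (k j) (ρp j) (ρm j) n1 n2 n3
  let g : ℤ → ℤ → ℤ → ℂ := fun n1 n2 n3 => casDet (v n1 n2 n3)
  -- By `casDet_monic`, the Casoratian in every direction is `g`.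
  have hcas : ∀ (a : ℂ) (n1 n2 n3 : ℤ), (Matrix.of fun j m : Fin N =>
      v n1 n2 n3 j ((Polynomial.X + Polynomial.C a) ^ (m : ℕ))).det = g n1 n2 n3 := by
    intro a n1 n2 n3
    exact casDet_monic _ (fun m : Fin N => (Polynomial.X + Polynomial.C a) ^ (m : ℕ))
      (fun i => by simp) (fun i => (Polynomial.monic_X_add_C a).pow _)
  have hfg : ∀ n1 n2 n3, f n1 n2 n3 = g n1 n2 n3 := by
    intro n1 n2 n3
    rcases hf with hf | hf | hf
    · rw [hf, ← hcas a1]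
      congr 1
      ext j m
      simp only [Matrix.of_apply, hψ, v, waveFun, zpow_add₀ (ha1 j), zpow_add₀ (ha1' j),
        zpow_natCast, LinearMap.add_apply, LinearMap.smul_apply, Polynomial.leval_apply,
        Polynomial.eval_pow, Polynomial.eval_add, Polynomial.eval_X, Polynomial.eval_C, smul_eq_mul]
      ring
    · rw [hf, ← hcas a2]
      congr 1
      ext j m
      simp only [Matrix.of_apply, hψ, v, waveFun, zpow_add₀ (ha2 j), zpow_add₀ (ha2' j),
        zpow_natCast, LinearMap.add_apply, LinearMap.smul_apply, Polynomial.leval_apply,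
        Polynomial.eval_pow, Polynomial.eval_add, Polynomial.eval_X, Polynomial.eval_C, smul_eq_mul]
      ring
    · rw [hf, ← hcas a3]
      congr 1
      ext j m
      simp only [Matrix.of_apply, hψ, v, waveFun, zpow_add₀ (ha3 j), zpow_add₀ (ha3' j),
        zpow_natCast, LinearMap.add_apply, LinearMap.smul_apply, Polynomial.leval_apply,
        Polynomial.eval_pow, Polynomial.eval_add, Polynomial.eval_X, Polynomial.eval_C, smul_eq_mul]
      ring
  have s1 : ∀ n1 n2 n3, mulShift a1 (v n1 n2 n3) = v (n1 + 1) n2 n3 := by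
    intro n1 n2 n3
    funext j
    refine LinearMap.ext fun p => ?_
    simp [mulShift, v, waveFun, zpow_add_one₀ (ha1 j), zpow_add_one₀ (ha1' j)]
    ring
  have s2 : ∀ n1 n2 n3, mulShift a2 (v n1 n2 n3) = v n1 (n2 + 1) n3 := by
    intro n1 n2 n3
    funext j
    refine LinearMap.ext fun p => ?_
    simp [mulShift, v, waveFun, zpow_add_one₀ (ha2 j), zpow_add_one₀ (ha2' j)]
    ring
  have s3 : ∀ n1 n2 n3, mulShift a3 (v n1 n2 n3) = v n1 n2 (n3 + 1) := by
    intro n1 n2 n3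
    funext j
    refine LinearMap.ext fun p => ?_
    simp [mulShift, v, waveFun, zpow_add_one₀ (ha3 j), zpow_add_one₀ (ha3' j)]
    ring
  let d : ℂ → Fin N → ℂ := fun a j => (k j + a) * (k j - a)
  -- Multiplication by `X - a` is a backward shift up to the row factor `d a j = k_j ^ 2 - a ^ 2`,
  -- as `(X + a)(X - a)` takes this value at both `k_j` and `-k_j`.
  have b2 : ∀ n1 n2 n3, mulShift (-a2) (v n1 (n2 + 1) n3) = fun j => d a2 j • v n1 n2 n3 j := by
    intro n1 n2 n3
    funext j
    refine LinearMap.ext fun p => ?_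
    simp [mulShift, v, waveFun, d, zpow_add_one₀ (ha2 j), zpow_add_one₀ (ha2' j)]
    ring
  have b3 : ∀ n1 n2 n3, mulShift (-a3) (v n1 n2 n3) = fun j => d a3 j • v n1 n2 (n3 - 1) j := by
    intro n1 n2 n3
    obtain ⟨m, rfl⟩ : ∃ m, n3 = m + 1 := ⟨n3 - 1, by ring⟩
    rw [add_sub_cancel_right]
    funext j
    refine LinearMap.ext fun p => ?_
    simp [mulShift, v, waveFun, d, zpow_add_one₀ (ha3 j), zpow_add_one₀ (ha3' j)]
    ring
  have hd2 : ∏ j, d a2 j ≠ 0 := Finset.prod_ne_zero_iff.mpr fun j _ =>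
    mul_ne_zero (by rw [add_comm]; exact ha2 j) (by rw [← neg_sub]; exact neg_ne_zero.mpr (ha2' j))
  have hd3 : ∏ j, d a3 j ≠ 0 := Finset.prod_ne_zero_iff.mpr fun j _ =>
    mul_ne_zero (by rw [add_comm]; exact ha3 j) (by rw [← neg_sub]; exact neg_ne_zero.mpr (ha3' j))
  have hg : ∀ n1 n2 n3, casDet (v n1 n2 n3) = g n1 n2 n3 := fun _ _ _ => rfl
  intro n1 n2 n3
  simp only [hfg]
  refine ⟨?_, ?_, ?_⟩
  · have h := three_term (v n1 (n2 + 1) n3) a1 (-a2) a3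
    simp only [s1, s3, b2, mulShift_smul, casDet_smul, hg] at h
    refine (mul_eq_zero.mp ?_).resolve_left hd2
    linear_combination -h
  · have h := three_term (v n1 (n2 + 1) n3) a1 (-a2) (-a3)
    simp only [s1, b2, b3, mulShift_smul, casDet_smul, hg] at h
    refine (mul_eq_zero.mp ?_).resolve_left (mul_ne_zero hd2 hd3)
    linear_combination h
  · have h := four_term (v n1 n2 n3) a1 a2 a3 (-a3)
    simp only [s1, s2, s3, b3, casDet_smul, hg, add_sub_cancel_right] at h
    refine (mul_eq_zero.mp ?_).resolve_left hd3
    linear_combination h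
end

section
/- Let f(n1,n2,n3) be the Casoratian in the direction n_λ (for any fixed λ ∈ {1,2,3}) of the vector ψ with entries ψ_j(n1,n2,n3) = ρ_j^+ ∏_{i=1}^3 (a_i+k_j)^{n_i} + ρ_j^- ∏_{i=1}^3 (a_i−k_j)^{n_i}. Then f satisfies the second bilinear H3 system (which is also the bilinear form of Q1 with power background) at every point: 2a3 f f_1 + (a1−a3) f_13 f^3 − (a1+a3) f_3 f_1^3 = 0 and 2a3 f f_2 + (a2−a3) f_23 f^3 − (a2+a3) f_3 f_2^3 = 0. -/
/-!
Let `K` be the operator multiplying the `+` part of `ψ_j` by `k_j` and its `-` part by `-k_j`. The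
shift in `n_i` acts on `ψ` as `a_i + K`, so by unitriangular column operations each of the three
Casoratians equals `W(ψ) = det (ψ, K ψ, …, K^(N-1) ψ)` (`casoratian_eq_W`).

The determinants `W` satisfy the three-term (discrete KP) identity
`(y - z) W((K-y)(K-z)ψ) W((K-x)ψ) + cyclic = 0` (`W_three_term`). Indeed, border the rows
`(ψ_j, Kψ_j, …, K^(N+1) ψ_j)` by two further rows `u, w` to obtain an alternating form `B(u, w)`.
With `u` and `w` geometric progressions of ratios `x` and `y`, it is `(y - x) W((K-x)(K-y)ψ)`; with
`w` the last unit vector it is `± W((K-x)ψ)`. The identity is then the Plücker relation for `B`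
(`plucker`), which follows from Cramer's rule.

Since `K²` acts on `ψ_j` as the scalar `k_j²`, the product `(K-a₃)(K+a₃)` only multiplies `W` by the
nonzero constant `∏ (k_j² - a₃²)`. This turns the backward shift in `n₃` into `K - a₃`, so the
bilinear equation is the three-term identity at `x = -a_i`, `y = -a₃`, `z = a₃` (`W_bilinear`).
-/

/-! ### Bordered determinants and the Plücker relation -/

/-- The matrix with first row `u` and the rows of `R` below it. -/
def bordered {m n : ℕ} (u : Fin n → ℂ) (R : Matrix (Fin m) (Fin n) ℂ) :
    Matrix (Fin (m + 1)) (Fin n) ℂ :=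
  Matrix.of fun i => Fin.cases u (fun j => R j) i

@[simp]
lemma bordered_zero {m n : ℕ} (u : Fin n → ℂ) (R : Matrix (Fin m) (Fin n) ℂ) (i : Fin n) :
    bordered u R 0 i = u i := rfl

@[simp]
lemma bordered_succ {m n : ℕ} (u : Fin n → ℂ) (R : Matrix (Fin m) (Fin n) ℂ) (j : Fin m)
    (i : Fin n) : bordered u R j.succ i = R j i := rfl

open Matrix in
lemma updateRow_bordered {m n : ℕ} (u v : Fin n → ℂ) (R : Matrix (Fin m) (Fin n) ℂ) :
    (bordered u R).updateRow 0 v = bordered v R := by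
  ext i j
  refine Fin.cases ?_ (fun i => ?_) i <;> simp [updateRow_apply]

open Matrix in
lemma updateRow_bordered_one {m n : ℕ} (x u v : Fin n → ℂ) (R : Matrix (Fin m) (Fin n) ℂ) :
    (bordered x (bordered u R)).updateRow 1 v = bordered x (bordered v R) := by
  rw [← Fin.succ_zero_eq_one]
  ext i j
  refine Fin.cases ?_ (fun i => Fin.cases ?_ (fun i => ?_) i) i <;>
    simp only [updateRow_apply, bordered_zero, bordered_succ, Fin.succ_inj, Fin.succ_ne_zero,
      (Fin.succ_ne_zero _).symm, if_true, if_false]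

open Matrix in
/-- Three-term Plücker relation for determinants sharing all rows but the first two. -/
lemma plucker_s8 {N : ℕ} (R : Matrix (Fin N) (Fin (N + 2)) ℂ) (x y z e : Fin (N + 2) → ℂ) :
    det (bordered x (bordered y R)) * det (bordered z (bordered e R)) =
      det (bordered z (bordered y R)) * det (bordered x (bordered e R)) +
      det (bordered x (bordered z R)) * det (bordered y (bordered e R)) := by
  set M := bordered x (bordered y R) with hM
  set E := bordered 0 (bordered e R) with hE
  -- By Cramer, `v ↦ det (v, e, R)` is a linear functional; it vanishes on the rows of `R`.
  have hL : ∀ v, det (bordered v (bordered e R)) = cramer Eᵀ v 0 := by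
    intro v
    rw [cramer_transpose_apply, hE, updateRow_bordered]
  -- Cramer's rule expands `det M • z` in the rows of `M`.
  have hc : M.det • z = ∑ i, cramer Mᵀ z i • M i := by
    rw [← det_transpose, ← mulVec_cramer Mᵀ z]
    ext j
    simp [mulVec, dotProduct, mul_comm]
  have hR : ∀ i, cramer Eᵀ (R i) 0 = 0 := by
    intro i
    rw [← hL]
    exact det_zero_of_row_eq (i := 0) (j := i.succ.succ) (Fin.succ_ne_zero _).symm rfl
  have h := congrArg (fun v => cramer Eᵀ v 0) hc
  have c0 : cramer Mᵀ z 0 = det (bordered z (bordered y R)) := by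
    rw [cramer_transpose_apply, hM, updateRow_bordered]
  have c1 : cramer Mᵀ z (Fin.succ 0) = det (bordered x (bordered z R)) := by
    rw [cramer_transpose_apply, hM, Fin.succ_zero_eq_one, updateRow_bordered_one]
  simp only [map_smul, map_sum, Finset.sum_apply, Pi.smul_apply, smul_eq_mul] at h
  rw [Fin.sum_univ_succ, Fin.sum_univ_succ] at h
  have m0 : M 0 = x := rfl
  have m1 : M (Fin.succ 0) = y := rfl
  have m2 : ∀ i : Fin N, M i.succ.succ = R i := fun i => rfl
  simp only [m0, m1, m2, hR, mul_zero, Finset.sum_const_zero, add_zero] at h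
  rw [hL z, hL x, hL y, ← c0, ← c1]
  exact h

open Matrix in
/-- Subtracting `x` times each column from the next clears a geometric row of ratio `x`. -/
lemma det_bordered_pow {m : ℕ} (R : Matrix (Fin m) (Fin (m + 1)) ℂ) (x : ℂ) :
    det (bordered (fun i => x ^ (i : ℕ)) R) =
      det (of fun j i : Fin m => R j i.succ - x * R j i.castSucc) := by
  set A := bordered (fun i : Fin (m + 1) => x ^ (i : ℕ)) R with hA
  set C : Matrix (Fin (m + 1)) (Fin (m + 1)) ℂ :=
    of fun r i => Fin.cases (A r 0) (fun i => A r i.succ - x * A r i.castSucc) i with hC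
  have h1 : A.det = C.det := by
    refine det_eq_of_forall_col_eq_smul_add_pred (fun _ => x) (fun i => rfl) ?_
    intro i j
    simp [hC]
  rw [h1, det_succ_row_zero, Fin.sum_univ_succ]
  have h2 : ∀ i : Fin m, C 0 i.succ = 0 := by
    intro i
    simp [hC, hA, pow_succ, mul_comm]
  have h3 : C 0 0 = 1 := by simp [hC, hA]
  simp only [h2, h3, mul_zero, zero_mul, Finset.sum_const_zero, add_zero]
  simp only [Fin.val_zero, pow_zero, one_mul]
  congr 1

open Matrix in
lemma det_bordered_last {m : ℕ} (R : Matrix (Fin m) (Fin (m + 1)) ℂ) :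
    det (bordered (Pi.single (Fin.last m) 1) R) =
      (-1) ^ m * det (of fun j i : Fin m => R j i.castSucc) := by
  rw [det_succ_row_zero, Fin.sum_univ_castSucc]
  simp only [bordered_zero, Pi.single_eq_same, Pi.single_apply, Fin.castSucc_ne_last]
  simp only [if_false, mul_zero, zero_mul, Finset.sum_const_zero, zero_add, Fin.val_last, mul_one,
    Fin.succAbove_last]
  congr 1

/-! ### The three-term identity for `W` -/

/-- `det (φ, K φ, …, K^(N-1) φ)` for the vector `φ_j = p_j + q_j`, where `K` multiplies the part
`p_j` by `k_j` and the part `q_j` by `-k_j`. -/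
noncomputable def W {N : ℕ} (k p q : Fin N → ℂ) : ℂ :=
  (Matrix.of fun j m : Fin N => p j * k j ^ (m : ℕ) + q j * (-k j) ^ (m : ℕ)).det

lemma W_smul {N : ℕ} (k p q s : Fin N → ℂ) :
    W k (fun j => s j * p j) (fun j => s j * q j) = (∏ j, s j) * W k p q := by
  unfold W
  rw [← Matrix.det_mul_column]
  congr 1
  ext j m
  simp
  ring

/-- The columns `φ, K φ, …, K^(n-1) φ`, for `φ` and `K` as in `W`. -/
def krylov {N : ℕ} (n : ℕ) (k p q : Fin N → ℂ) : Matrix (Fin N) (Fin n) ℂ :=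
  Matrix.of fun j i => p j * k j ^ (i : ℕ) + q j * (-k j) ^ (i : ℕ)

open Matrix in
/-- Bordering by geometric rows of ratios `x` and `y`. -/
lemma border_pow_pow {N : ℕ} (k p q : Fin N → ℂ) (x y : ℂ) :
    det (bordered (fun i => x ^ (i : ℕ))
      (bordered (fun i => y ^ (i : ℕ)) (krylov (N + 2) k p q))) =
      (y - x) * W k (fun j => p j * (k j - x) * (k j - y))
        (fun j => q j * (-k j - x) * (-k j - y)) := by
  rw [det_bordered_pow]
  have h : (of fun j i : Fin (N + 1) =>
      bordered (fun i => y ^ (i : ℕ)) (krylov (N + 2) k p q) j i.succ -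
        x * bordered (fun i => y ^ (i : ℕ)) (krylov (N + 2) k p q) j i.castSucc) =
      (bordered (fun i => y ^ (i : ℕ)) (krylov (N + 1) k (fun j => p j * (k j - x))
        (fun j => q j * (-k j - x)))).updateRow 0
          ((y - x) • fun i : Fin (N + 1) => y ^ (i : ℕ)) := by
    rw [updateRow_bordered]
    ext j i
    refine Fin.cases ?_ (fun j => ?_) j
    · simp [pow_succ]
      ring
    · simp [krylov, pow_succ]
      ring
  rw [h, det_updateRow_smul, updateRow_bordered, det_bordered_pow, W]
  congr 2
  ext j i
  simp [krylov, pow_succ]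
  ring

open Matrix in
/-- Bordering by a geometric row of ratio `x` and the last unit row. -/
lemma border_pow_last {N : ℕ} (k p q : Fin N → ℂ) (x : ℂ) :
    det (bordered (fun i => x ^ (i : ℕ))
      (bordered (Pi.single (Fin.last (N + 1)) 1) (krylov (N + 2) k p q))) =
      (-1) ^ N * W k (fun j => p j * (k j - x)) (fun j => q j * (-k j - x)) := by
  rw [det_bordered_pow]
  have h : (of fun j i : Fin (N + 1) =>
      bordered (Pi.single (Fin.last (N + 1)) 1) (krylov (N + 2) k p q) j i.succ -
        x * bordered (Pi.single (Fin.last (N + 1)) 1) (krylov (N + 2) k p q) j i.castSucc) =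
      bordered (Pi.single (Fin.last N) 1) (krylov (N + 1) k (fun j => p j * (k j - x))
        (fun j => q j * (-k j - x))) := by
    ext j i
    refine Fin.cases ?_ (fun j => ?_) j
    · have hi : i.castSucc ≠ (Fin.last N).succ := Fin.castSucc_ne_last i
      simp [Pi.single_apply, ← Fin.succ_last, hi]
    · simp [krylov, pow_succ]
      ring
  rw [h, det_bordered_last, W]
  rfl

/-- The discrete KP identity. -/
lemma W_three_term {N : ℕ} (k p q : Fin N → ℂ) (x y z : ℂ) :
    (y - z) * W k (fun j => p j * (k j - y) * (k j - z)) (fun j => q j * (-k j - y) * (-k j - z)) *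
        W k (fun j => p j * (k j - x)) (fun j => q j * (-k j - x)) +
      (z - x) * W k (fun j => p j * (k j - x) * (k j - z))
          (fun j => q j * (-k j - x) * (-k j - z)) *
        W k (fun j => p j * (k j - y)) (fun j => q j * (-k j - y)) +
      (x - y) * W k (fun j => p j * (k j - x) * (k j - y))
          (fun j => q j * (-k j - x) * (-k j - y)) *
        W k (fun j => p j * (k j - z)) (fun j => q j * (-k j - z)) = 0 := by
  have h := plucker_s8 (krylov (N + 2) k p q)
    (fun i => x ^ (i : ℕ)) (fun i => y ^ (i : ℕ)) (fun i => z ^ (i : ℕ))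
    (Pi.single (Fin.last (N + 1)) 1)
  simp only [border_pow_pow, border_pow_last] at h
  have hs : W k (fun j => p j * (k j - z) * (k j - y)) (fun j => q j * (-k j - z) * (-k j - y)) =
      W k (fun j => p j * (k j - y) * (k j - z)) (fun j => q j * (-k j - y) * (-k j - z)) := by
    congr 1 <;> ext j <;> ring
  rw [hs] at h
  have hne : ((-1 : ℂ)) ^ N ≠ 0 := pow_ne_zero _ (by norm_num)
  apply mul_left_cancel₀ hne
  linear_combination -h

/-! ### The bilinear equation -/

/-- The bilinear equation for `a = a_i`, `b = a₃`, with `p + q` the value of `ψ` at the point with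
third coordinate `n₃ - 1`, so that only forward shifts occur. -/
lemma W_bilinear {N : ℕ} (k p q : Fin N → ℂ) (a b : ℂ)
    (hb : ∀ j, b + k j ≠ 0) (hb' : ∀ j, b - k j ≠ 0) :
    2 * b * W k (fun j => p j * (b + k j)) (fun j => q j * (b - k j)) *
        W k (fun j => p j * (b + k j) * (a + k j)) (fun j => q j * (b - k j) * (a - k j)) +
      (a - b) * W k (fun j => p j * (b + k j) * (b + k j) * (a + k j))
          (fun j => q j * (b - k j) * (b - k j) * (a - k j)) * W k p q -
      (a + b) * W k (fun j => p j * (b + k j) * (b + k j))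
          (fun j => q j * (b - k j) * (b - k j)) *
        W k (fun j => p j * (a + k j)) (fun j => q j * (a - k j)) = 0 := by
  have h := W_three_term k (fun j => p j * (b + k j)) (fun j => q j * (b - k j)) (-a) (-b) b
  have hc : (∏ j, (k j - b) * (k j + b)) ≠ 0 := by
    refine Finset.prod_ne_zero_iff.2 fun j _ => mul_ne_zero ?_ ?_
    · rw [← neg_sub]; exact neg_ne_zero.2 (hb' j)
    · rw [add_comm]; exact hb j
  -- On both parts, `(K - b)(K + b)` is multiplication by `(k j - b) * (k j + b)`.
  have e1 := W_smul k (fun j => p j * (b + k j)) (fun j => q j * (b - k j))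
    (fun j => (k j - b) * (k j + b))
  have e2 := W_smul k p q (fun j => (k j - b) * (k j + b))
  have e3 := W_smul k (fun j => p j * (a + k j)) (fun j => q j * (a - k j))
    (fun j => (k j - b) * (k j + b))
  apply mul_left_cancel₀ hc
  have t1 : W k (fun j => p j * (b + k j) * (k j - -b) * (k j - b))
      (fun j => q j * (b - k j) * (-k j - -b) * (-k j - b)) =
      W k (fun j => (k j - b) * (k j + b) * (p j * (b + k j)))
        (fun j => (k j - b) * (k j + b) * (q j * (b - k j))) := by
    congr 1 <;> ext j <;> ring
  have t2 : W k (fun j => p j * (b + k j) * (k j - b)) (fun j => q j * (b - k j) * (-k j - b)) =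
      W k (fun j => (k j - b) * (k j + b) * p j) (fun j => (k j - b) * (k j + b) * q j) := by
    congr 1 <;> ext j <;> ring
  have t3 : W k (fun j => p j * (b + k j) * (k j - -a) * (k j - b))
      (fun j => q j * (b - k j) * (-k j - -a) * (-k j - b)) =
      W k (fun j => (k j - b) * (k j + b) * (p j * (a + k j)))
        (fun j => (k j - b) * (k j + b) * (q j * (a - k j))) := by
    congr 1 <;> ext j <;> ring
  have t4 : W k (fun j => p j * (b + k j) * (k j - -a)) (fun j => q j * (b - k j) * (-k j - -a)) =
      W k (fun j => p j * (b + k j) * (a + k j)) (fun j => q j * (b - k j) * (a - k j)) := by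
    congr 1 <;> ext j <;> ring
  have t5 : W k (fun j => p j * (b + k j) * (k j - -b)) (fun j => q j * (b - k j) * (-k j - -b)) =
      W k (fun j => p j * (b + k j) * (b + k j)) (fun j => q j * (b - k j) * (b - k j)) := by
    congr 1 <;> ext j <;> ring
  have t6 : W k (fun j => p j * (b + k j) * (k j - -a) * (k j - -b))
      (fun j => q j * (b - k j) * (-k j - -a) * (-k j - -b)) =
      W k (fun j => p j * (b + k j) * (b + k j) * (a + k j))
        (fun j => q j * (b - k j) * (b - k j) * (a - k j)) := by
    congr 1 <;> ext j <;> ring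
  rw [t1, t2, t3, t4, t5, t6, e1, e2, e3] at h
  linear_combination -h

open Matrix Polynomial in
/-- Replacing the powers of `K` by those of `a + K` is a unitriangular change of columns. -/
lemma casoratian_eq_W {N : ℕ} (k p q : Fin N → ℂ) (a : ℂ) :
    (of fun j m : Fin N => p j * (a + k j) ^ (m : ℕ) + q j * (a - k j) ^ (m : ℕ)).det =
      W k p q := by
  have hdeg : ∀ i : Fin N, ((X + C a : ℂ[X]) ^ (i : ℕ)).natDegree = i := fun i => by simp
  have hT := det_matrixOfPolynomials (fun i : Fin N => (X + C a : ℂ[X]) ^ (i : ℕ)) hdeg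
    (fun i => (monic_X_add_C a).pow _)
  rw [W, ← mul_one (det (of fun j m : Fin N => p j * k j ^ (m : ℕ) + q j * (-k j) ^ (m : ℕ))),
    ← hT, ← det_mul]
  congr 1
  have ev : ∀ (t : ℂ) (m : Fin N),
      ∑ i : Fin N, t ^ (i : ℕ) * ((X + C a : ℂ[X]) ^ (m : ℕ)).coeff i = (a + t) ^ (m : ℕ) := by
    intro t m
    have h : ((X + C a : ℂ[X]) ^ (m : ℕ)).eval t = (a + t) ^ (m : ℕ) := by simp [add_comm]
    rw [← h, eval_eq_sum_range' (n := N) (by rw [hdeg]; exact m.2), Finset.sum_range]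
    exact Finset.sum_congr rfl fun i _ => mul_comm _ _
  ext j m
  have e2 := ev (-k j) m
  rw [← sub_eq_add_neg] at e2
  rw [of_apply, ← ev (k j) m, ← e2, mul_apply, Finset.mul_sum, Finset.mul_sum,
    ← Finset.sum_add_distrib]
  refine Finset.sum_congr rfl fun i _ => ?_
  simp only [of_apply]
  ring

theorem stmt_8 (N : ℕ) (hN : 1 ≤ N) (a1 a2 a3 : ℂ) (k ρp ρm : Fin N → ℂ)
    (ha1 : ∀ j, a1 + k j ≠ 0) (ha1' : ∀ j, a1 - k j ≠ 0)
    (ha2 : ∀ j, a2 + k j ≠ 0) (ha2' : ∀ j, a2 - k j ≠ 0)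
    (ha3 : ∀ j, a3 + k j ≠ 0) (ha3' : ∀ j, a3 - k j ≠ 0)
    (ψ : Fin N → ℤ → ℤ → ℤ → ℂ)
    (hψ : ∀ j n1 n2 n3, ψ j n1 n2 n3 =
      ρp j * (a1 + k j) ^ n1 * (a2 + k j) ^ n2 * (a3 + k j) ^ n3 +
      ρm j * (a1 - k j) ^ n1 * (a2 - k j) ^ n2 * (a3 - k j) ^ n3)
    (f : ℤ → ℤ → ℤ → ℂ)
    (hf : (∀ n1 n2 n3, f n1 n2 n3 =
            (Matrix.of fun j m : Fin N => ψ j (n1 + (m.1 : ℤ)) n2 n3).det) ∨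
          (∀ n1 n2 n3, f n1 n2 n3 =
            (Matrix.of fun j m : Fin N => ψ j n1 (n2 + (m.1 : ℤ)) n3).det) ∨
          (∀ n1 n2 n3, f n1 n2 n3 =
            (Matrix.of fun j m : Fin N => ψ j n1 n2 (n3 + (m.1 : ℤ))).det)) :
    ∀ n1 n2 n3 : ℤ,
      (2 * a3 * f n1 n2 n3 * f (n1 + 1) n2 n3 +
        (a1 - a3) * f (n1 + 1) n2 (n3 + 1) * f n1 n2 (n3 - 1) -
        (a1 + a3) * f n1 n2 (n3 + 1) * f (n1 + 1) n2 (n3 - 1) = 0) ∧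
      (2 * a3 * f n1 n2 n3 * f n1 (n2 + 1) n3 +
        (a2 - a3) * f n1 (n2 + 1) (n3 + 1) * f n1 n2 (n3 - 1) -
        (a2 + a3) * f n1 n2 (n3 + 1) * f n1 (n2 + 1) (n3 - 1) = 0) := by
  set P : ℤ → ℤ → ℤ → Fin N → ℂ := fun n1 n2 n3 j =>
    ρp j * (a1 + k j) ^ n1 * (a2 + k j) ^ n2 * (a3 + k j) ^ n3 with hP
  set Q : ℤ → ℤ → ℤ → Fin N → ℂ := fun n1 n2 n3 j =>
    ρm j * (a1 - k j) ^ n1 * (a2 - k j) ^ n2 * (a3 - k j) ^ n3 with hQ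
  have key : ∀ n1 n2 n3 : ℤ, f n1 n2 n3 = W k (P n1 n2 n3) (Q n1 n2 n3) := by
    intro n1 n2 n3
    rcases hf with hf | hf | hf
    · rw [hf, ← casoratian_eq_W k _ _ a1]
      congr 1
      ext j m
      simp only [Matrix.of_apply, hP, hQ, hψ, zpow_add₀ (ha1 j), zpow_add₀ (ha1' j), zpow_natCast]
      ring
    · rw [hf, ← casoratian_eq_W k _ _ a2]
      congr 1
      ext j m
      simp only [Matrix.of_apply, hP, hQ, hψ, zpow_add₀ (ha2 j), zpow_add₀ (ha2' j), zpow_natCast]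
      ring
    · rw [hf, ← casoratian_eq_W k _ _ a3]
      congr 1
      ext j m
      simp only [Matrix.of_apply, hP, hQ, hψ, zpow_add₀ (ha3 j), zpow_add₀ (ha3' j), zpow_natCast]
      ring
  intro n1 n2 n3
  -- Taking `n3 - 1` as base point leaves only forward shifts.
  obtain ⟨l, rfl⟩ : ∃ l, n3 = l + 1 := ⟨n3 - 1, by ring⟩
  have sP1 : ∀ n1 n2 n3, P (n1 + 1) n2 n3 = fun j => P n1 n2 n3 j * (a1 + k j) := by
    intro n1 n2 n3
    ext j
    simp only [hP, zpow_add_one₀ (ha1 j)]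
    ring
  have sP2 : ∀ n1 n2 n3, P n1 (n2 + 1) n3 = fun j => P n1 n2 n3 j * (a2 + k j) := by
    intro n1 n2 n3
    ext j
    simp only [hP, zpow_add_one₀ (ha2 j)]
    ring
  have sP3 : ∀ n1 n2 n3, P n1 n2 (n3 + 1) = fun j => P n1 n2 n3 j * (a3 + k j) := by
    intro n1 n2 n3
    ext j
    simp only [hP, zpow_add_one₀ (ha3 j)]
    ring
  have sQ1 : ∀ n1 n2 n3, Q (n1 + 1) n2 n3 = fun j => Q n1 n2 n3 j * (a1 - k j) := by
    intro n1 n2 n3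
    ext j
    simp only [hQ, zpow_add_one₀ (ha1' j)]
    ring
  have sQ2 : ∀ n1 n2 n3, Q n1 (n2 + 1) n3 = fun j => Q n1 n2 n3 j * (a2 - k j) := by
    intro n1 n2 n3
    ext j
    simp only [hQ, zpow_add_one₀ (ha2' j)]
    ring
  have sQ3 : ∀ n1 n2 n3, Q n1 n2 (n3 + 1) = fun j => Q n1 n2 n3 j * (a3 - k j) := by
    intro n1 n2 n3
    ext j
    simp only [hQ, zpow_add_one₀ (ha3' j)]
    ring
  have H := fun a => W_bilinear k (P n1 n2 l) (Q n1 n2 l) a a3 ha3 ha3'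
  simp only [key, add_sub_cancel_right]
  simp only [sP1, sP2, sQ1, sQ2]
  simp only [sP3, sQ3]
  exact ⟨H a1, H a2⟩
end

section
/- Let τ(n1,n2,n3) be the Casoratian in the direction n1 of the vector ψ with entries ψ_j(n1,n2,n3) = ρ_j^+ ∏_{i=1}^3 (a_i+k_j)^{n_i} + ρ_j^- ∏_{i=1}^3 (a_i−k_j)^{n_i}. Then τ satisfies the three reflected discrete AKP equations at every point: A1 := (a2−a3) τ τ_123 + (a3+a1) τ_3 τ_12 − (a1+a2) τ_2 τ_13 = 0; A2 := (a3−a1) τ τ_123 + (a1+a2) τ_1 τ_23 − (a2+a3) τ_3 τ_12 = 0; and A3 := (a1−a2) τ τ_123 + (a2+a3) τ_2 τ_13 − (a3+a1) τ_1 τ_23 = 0. -/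
/-!
Only the shifts of one base point `n` matter, and there each entry `ψ_j` is a linear functional
`L_j p = α_j p(k_j) + β_j p(-k_j)` of a polynomial `p`. Write `T(q) = det [L_j (q X ^ m)]`.
Replacing the powers `X ^ m` by any monic polynomials of degree `m` does not change this
determinant, so every `τ` in the statement is `T` of a product of distinct factors `X + a_i`.

For arbitrary functionals `L_j`, `T` satisfies the usual discrete AKP equation
`(b - a) T(X+c) T((X+a)(X+b)) = (b - c) T(X+a) T((X+b)(X+c)) + (c - a) T(X+b) T((X+a)(X+c))`
(`casT_akp`): this is the three-term Plücker relation (`plucker`), itself a consequence of Cramer's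
rule, for the products `(X+b)(X+c)`, `(X+a)(X+c)`, `(X+a)(X+b)`, the polynomial
`(X+a)(X+b)(X+c) X ^ n` and the common columns `(X+a)(X+b)(X+c) X ^ i`, `i < n`, with `N = n + 2`.

The reflected equations use the special form of `L_j`: since `(X+c)(X-c)` is even, multiplication by
it only rescales `L_j` by `k_j ^ 2 - c ^ 2`. The usual equation for the functionals
`p ↦ L_j ((X+c) p)` with parameters `a, b, -c` is therefore the reflected equation times
`∏ (k_j ^ 2 - c ^ 2)`, which is nonzero (`casT_reflected`).
-/

open Polynomial in
/-- The determinant of the vectors `L (q * X ^ m)`, `m < N` (as rows): the Casoratian of the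
functionals `L` multiplied by `q`. -/
noncomputable def casT {N : ℕ} (L : ℂ[X] →ₗ[ℂ] (Fin N → ℂ)) (q : ℂ[X]) : ℂ :=
  Matrix.detRowAlternating fun m : Fin N => L (q * X ^ (m : ℕ))

open Polynomial in
/-- The powers `X ^ m` in `casT` may be replaced by any monic polynomials of degree `m`, because
the change of basis is unitriangular. -/
lemma casT_eq_of_monic {N : ℕ} (L : ℂ[X] →ₗ[ℂ] (Fin N → ℂ)) (q : ℂ[X]) (p : Fin N → ℂ[X])
    (hd : ∀ i, (p i).natDegree = i) (hm : ∀ i, (p i).Monic) :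
    Matrix.detRowAlternating (fun m : Fin N => L (q * p m)) = casT L q := by
  have h := Matrix.det_matrixOfPolynomials p hd hm
  have hmul : (fun m : Fin N => L (q * p m)) =
      (Matrix.of fun i j : Fin N => (p j).coeff i).transpose *
        (Matrix.of fun m : Fin N => L (q * X ^ (m : ℕ))) := by
    funext m j
    have hp : p m = ∑ i : Fin N, (p m).coeff i • (X : ℂ[X]) ^ (i : ℕ) := by
      rw [Fin.sum_univ_eq_sum_range (fun i => (p m).coeff i • (X : ℂ[X]) ^ i)]
      conv_lhs => rw [(p m).as_sum_range' N (by rw [hd]; exact m.2)]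
      simp [← C_mul_X_pow_eq_monomial, smul_eq_C_mul]
    conv_lhs => rw [hp]
    simp [Matrix.mul_apply, Finset.mul_sum]
  change Matrix.det (fun m : Fin N => L (q * p m)) = _
  rw [hmul, Matrix.det_mul, Matrix.det_transpose, h, one_mul]
  rfl

/-- The determinant with rows `u`, `v`, `M 0`, …, `M (n - 1)`. -/
noncomputable def bracket {n : ℕ} (M : Fin n → Fin (n + 2) → ℂ) (u v : Fin (n + 2) → ℂ) : ℂ :=
  Matrix.detRowAlternating (Matrix.vecCons u (Matrix.vecCons v M))

/-- The three-term Plücker relation. By Cramer's rule `bracket M e₁ e₂ • e₃` is a combination of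
`e₁`, `e₂` and the `M i`; apply the linear form `bracket M · f`, which kills the `M i`. -/
lemma plucker_s13 {n : ℕ} (M : Fin n → Fin (n + 2) → ℂ) (e₁ e₂ e₃ f : Fin (n + 2) → ℂ) :
    bracket M e₁ e₂ * bracket M e₃ f =
      bracket M e₃ e₂ * bracket M e₁ f + bracket M e₁ e₃ * bracket M e₂ f := by
  let A : Matrix (Fin (n + 2)) (Fin (n + 2)) ℂ := Matrix.of (Matrix.vecCons e₁ (Matrix.vecCons e₂ M))
  let φ : (Fin (n + 2) → ℂ) →ₗ[ℂ] ℂ :=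
    { toFun := fun x => bracket M x f
      map_add' := fun x y => AlternatingMap.map_vecCons_add _ _ _ _
      map_smul' := fun c x => AlternatingMap.map_vecCons_smul _ _ _ _ }
  have hφ : ∀ x, φ x = bracket M x f := fun _ => rfl
  have hM : ∀ i, φ (M i) = 0 := fun i =>
    AlternatingMap.map_eq_zero_of_eq Matrix.detRowAlternating
      (Matrix.vecCons (M i) (Matrix.vecCons f M))
      (i := 0) (j := i.succ.succ) rfl
      (Fin.succ_ne_zero _).symm
  have hc : A.det • e₃ = ∑ i, (A.updateRow i e₃).det • A i := by
    have h := Matrix.mulVec_cramer A.transpose e₃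
    rw [Matrix.det_transpose] at h
    rw [← h]
    funext j
    simp [Matrix.mulVec, dotProduct, Matrix.cramer_transpose_apply, mul_comm]
  have h0 : A.updateRow 0 e₃ = Matrix.of (Matrix.vecCons e₃ (Matrix.vecCons e₂ M)) := by
    ext i j
    refine Fin.cases ?_ (fun i => ?_) i
    · simp
    · simp [A, Matrix.updateRow_apply]
  have h1 : A.updateRow 1 e₃ = Matrix.of (Matrix.vecCons e₁ (Matrix.vecCons e₃ M)) := by
    ext i j
    refine Fin.cases ?_ (fun i => Fin.cases ?_ (fun i => ?_) i) i
    · simp [A, Matrix.updateRow_apply]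
    · simp [A]
    · have : i.succ.succ ≠ (1 : Fin (n + 2)) := by simp [Fin.ext_iff]
      simp [A, Matrix.updateRow_apply, this]
  have h := congrArg φ hc
  rw [map_smul, map_sum, Fin.sum_univ_succ, Fin.sum_univ_succ] at h
  have hz : ∀ i : Fin n, φ ((A.updateRow i.succ.succ e₃).det • A i.succ.succ) = 0 := by
    intro i
    rw [map_smul, show A i.succ.succ = M i from rfl, hM, smul_zero]
  rw [Finset.sum_eq_zero (fun i _ => hz i), add_zero, map_smul, map_smul, Fin.succ_zero_eq_one,
    h0, h1] at h
  exact h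

open Polynomial in
/-- Two linear factors span the polynomials of degree at most one, with change of basis of
determinant `c - b`. -/
lemma bracket_pair {n : ℕ} (L : ℂ[X] →ₗ[ℂ] (Fin (n + 2) → ℂ)) (q : ℂ[X]) (b c : ℂ) :
    bracket (fun i : Fin n => L (q * ((X + C b) * (X + C c) * X ^ (i : ℕ))))
      (L (q * (X + C c))) (L (q * (X + C b))) = (c - b) * casT L q := by
  have hsplit : L (q * (X + C c)) = (c - b) • L (q * 1) + L (q * (X + C b)) := by
    rw [← map_smul, ← map_add]
    congr 1
    rw [smul_eq_C_mul, C_sub]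
    ring
  rw [hsplit]
  unfold bracket
  rw [AlternatingMap.map_vecCons_add, AlternatingMap.map_vecCons_smul,
    AlternatingMap.map_eq_zero_of_eq _ (Matrix.vecCons (L (q * (X + C b))) _)
      (i := 0) (j := 1) (by simp) (by simp), add_zero, smul_eq_mul]
  congr 1
  rw [← casT_eq_of_monic L q (Matrix.vecCons 1 (Matrix.vecCons (X + C b)
    fun i : Fin n => (X + C b) * (X + C c) * X ^ (i : ℕ)))]
  · congr 1
    funext m
    refine Fin.cases rfl (fun m => Fin.cases rfl (fun m => rfl) m) m
  · intro i
    refine Fin.cases (by simp) (fun m => Fin.cases (by simp) (fun m => ?_) m) i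
    have h : ((X + C b) * (X + C c) : ℂ[X]).Monic := (monic_X_add_C b).mul (monic_X_add_C c)
    simp only [Matrix.cons_val_succ, Fin.val_succ]
    rw [h.natDegree_mul (monic_X_pow _), (monic_X_add_C b).natDegree_mul (monic_X_add_C c)]
    simp
    ring
  · intro i
    refine Fin.cases (by simp) (fun m => Fin.cases ?_ (fun m => ?_) m) i
    · simpa using monic_X_add_C b
    · simpa using ((monic_X_add_C b).mul (monic_X_add_C c)).mul (monic_X_pow _)

/-- The permutation `0 ↦ 0`, `1 ↦ n + 1`, `i + 2 ↦ i + 1`. -/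
def topPerm (n : ℕ) : Equiv.Perm (Fin (n + 2)) :=
  Equiv.Perm.decomposeFin.symm (0, (finRotate (n + 1))⁻¹)

open Polynomial in
/-- The sign is that of the permutation moving the row of highest degree to the end. It depends on
`n` only, so it factors out of the Plücker relation. -/
lemma bracket_top {n : ℕ} (L : ℂ[X] →ₗ[ℂ] (Fin (n + 2) → ℂ)) (q : ℂ[X]) (a : ℂ) :
    bracket (fun i : Fin n => L (q * ((X + C a) * X ^ (i : ℕ))))
      (L q) (L (q * ((X + C a) * X ^ n))) =
      ((Equiv.Perm.sign (topPerm n) : ℤ) : ℂ) * casT L q := by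
  rw [← casT_eq_of_monic L q (Matrix.vecCons 1
    fun i : Fin (n + 1) => (X + C a) * X ^ (i : ℕ))]
  · have h := Matrix.det_permute (topPerm n) (Matrix.of fun m : Fin (n + 2) =>
      L (q * (Matrix.vecCons 1 (fun i : Fin (n + 1) => (X + C a) * X ^ (i : ℕ)) :
        Fin (n + 2) → ℂ[X]) m))
    refine Eq.trans ?_ h
    change Matrix.det _ = Matrix.det _
    congr 1
    ext m j
    refine Fin.cases ?_ (fun m => Fin.cases ?_ (fun m => ?_) m) m
    · simp [topPerm, Matrix.submatrix]
    · have : (finRotate (n + 1))⁻¹ 0 = Fin.last n := by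
        rw [Equiv.Perm.inv_eq_iff_eq]; simp
      simp only [topPerm, Matrix.submatrix, Matrix.of_apply, id,
        Equiv.Perm.decomposeFin_symm_apply_succ, Equiv.swap_self, Equiv.refl_apply, this]
      rw [Matrix.cons_val_succ, Matrix.cons_val_succ, Matrix.cons_val_zero, Fin.val_last]
    · have : (finRotate (n + 1))⁻¹ m.succ = m.castSucc := by
        rw [Equiv.Perm.inv_eq_iff_eq]; simp
      simp only [topPerm, Matrix.submatrix, Matrix.of_apply, id,
        Equiv.Perm.decomposeFin_symm_apply_succ, Equiv.swap_self, Equiv.refl_apply, this]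
      simp
  · intro i
    refine Fin.cases (by simp) (fun m => ?_) i
    simp only [Matrix.cons_val_succ, Fin.val_succ]
    rw [(monic_X_add_C a).natDegree_mul (monic_X_pow _)]
    simp
    ring
  · intro i
    refine Fin.cases (by simp) (fun m => ?_) i
    simpa using (monic_X_add_C a).mul (monic_X_pow _)

open Polynomial in
/-- The discrete AKP equation for the Casoratian of arbitrary functionals. -/
lemma casT_akp {N : ℕ} (hN : 1 ≤ N) (L : ℂ[X] →ₗ[ℂ] (Fin N → ℂ)) (a b c : ℂ) :
    (b - a) * casT L (X + C c) * casT L ((X + C a) * (X + C b)) =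
      (b - c) * casT L (X + C a) * casT L ((X + C b) * (X + C c)) +
      (c - a) * casT L (X + C b) * casT L ((X + C a) * (X + C c)) := by
  obtain _ | _ | n := N
  · omega
  · -- For `N = 1` there is no room for two free rows; there `casT L q = L q 0` is linear in `q`.
    have hT : ∀ q, casT L q = L q 0 := by
      intro q
      change Matrix.det _ = _
      refine (Matrix.det_fin_one _).trans ?_
      simp
    have h1 : ∀ s : ℂ, L (X + C s) 0 = L X 0 + s * L 1 0 := by
      intro s
      rw [show (X + C s : ℂ[X]) = X + s • 1 by rw [smul_eq_C_mul, mul_one], map_add, map_smul]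
      rfl
    have h2 : ∀ s t : ℂ, L ((X + C s) * (X + C t)) 0 =
        L (X ^ 2) 0 + (s + t) * L X 0 + s * t * L 1 0 := by
      intro s t
      rw [show ((X + C s) * (X + C t) : ℂ[X]) = X ^ 2 + (s + t) • X + (s * t) • 1 by
        simp only [smul_eq_C_mul, C_add, C_mul]; ring, map_add, map_add, map_smul, map_smul]
      rfl
    simp only [hT, h1, h2]
    ring
  · set M : Fin n → Fin (n + 2) → ℂ :=
      fun i => L ((X + C a) * (X + C b) * (X + C c) * X ^ (i : ℕ)) with hM
    have hs : ((Equiv.Perm.sign (topPerm n) : ℤ) : ℂ) ≠ 0 := by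
      exact_mod_cast (Equiv.Perm.sign (topPerm n)).ne_zero
    have pair : ∀ r s t : ℂ, (X + C r) * (X + C s) * (X + C t) =
        ((X + C a) * (X + C b) * (X + C c) : ℂ[X]) →
        bracket M (L ((X + C r) * (X + C t))) (L ((X + C r) * (X + C s))) =
          (t - s) * casT L (X + C r) := by
      intro r s t h
      rw [← bracket_pair, hM]
      simp only [← h, mul_assoc]
    have top : ∀ r s t : ℂ, (X + C r) * (X + C s) * (X + C t) =
        ((X + C a) * (X + C b) * (X + C c) : ℂ[X]) →
        bracket M (L ((X + C r) * (X + C s)))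
          (L ((X + C a) * (X + C b) * (X + C c) * X ^ n)) =
          ((Equiv.Perm.sign (topPerm n) : ℤ) : ℂ) * casT L ((X + C r) * (X + C s)) := by
      intro r s t h
      rw [← bracket_top (a := t), hM]
      simp only [← h, mul_assoc]
    have key := plucker_s13 M (L ((X + C b) * (X + C c))) (L ((X + C a) * (X + C c)))
      (L ((X + C a) * (X + C b))) (L ((X + C a) * (X + C b) * (X + C c) * X ^ n))
    rw [top a b c rfl, top b c a (by ring), top a c b (by ring), pair a c b (by ring),
      mul_comm (X + C b) (X + C c), mul_comm (X + C a) (X + C c),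
      pair c a b (by ring), mul_comm (X + C c) (X + C b), mul_comm (X + C a) (X + C b),
      pair b a c (by ring)] at key
    apply mul_left_cancel₀ hs
    rw [mul_comm (X + C c) (X + C a), mul_comm (X + C b) (X + C a)] at key
    linear_combination key

open Polynomial in
/-- The functionals `p ↦ α_j p(k_j) + β_j p(-k_j)`. -/
noncomputable def waveL {N : ℕ} (α β k : Fin N → ℂ) : ℂ[X] →ₗ[ℂ] (Fin N → ℂ) where
  toFun p j := α j * p.eval (k j) + β j * p.eval (-k j)
  map_add' p q := by funext j; simp; ring
  map_smul' r p := by funext j; simp; ring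

open Polynomial in
/-- Even factors of `q` come out of `casT (waveL α β k) q` row by row. -/
lemma casT_even {N : ℕ} (α β k : Fin N → ℂ) (c : ℂ) (q : ℂ[X]) :
    casT (waveL α β k) ((X + C c) * (X + C (-c)) * q) =
      (∏ j, (k j ^ 2 - c ^ 2)) * casT (waveL α β k) q := by
  have h := Matrix.det_mul_row (fun j => k j ^ 2 - c ^ 2)
    (Matrix.of fun m : Fin N => waveL α β k (q * X ^ (m : ℕ)))
  refine Eq.trans ?_ h
  change Matrix.det _ = Matrix.det _
  congr 1
  ext m j
  simp [waveL]
  ring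

open Polynomial in
/-- The reflected discrete AKP equation. -/
lemma casT_reflected {N : ℕ} (hN : 1 ≤ N) (α β k : Fin N → ℂ) (a b c : ℂ)
    (hp : ∀ j, c + k j ≠ 0) (hm : ∀ j, c - k j ≠ 0) :
    (b - a) * casT (waveL α β k) 1 *
        casT (waveL α β k) ((X + C a) * (X + C b) * (X + C c)) =
      (b + c) * casT (waveL α β k) ((X + C a) * (X + C c)) * casT (waveL α β k) (X + C b) -
      (c + a) * casT (waveL α β k) (X + C a) *
        casT (waveL α β k) ((X + C b) * (X + C c)) := by
  set L := waveL α β k with hL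
  have hκ : (∏ j, (k j ^ 2 - c ^ 2)) ≠ 0 := by
    refine Finset.prod_ne_zero_iff.2 fun j _ => ?_
    rw [show k j ^ 2 - c ^ 2 = -((c + k j) * (c - k j)) by ring]
    exact neg_ne_zero.2 (mul_ne_zero (hp j) (hm j))
  have hshift : ∀ q, casT (L ∘ₗ LinearMap.mulLeft ℂ (X + C c)) q = casT L ((X + C c) * q) := by
    intro q
    simp [casT, mul_assoc]
  have key := casT_akp hN (L ∘ₗ LinearMap.mulLeft ℂ (X + C c)) a b (-c)
  simp only [hshift] at key
  have e0 := casT_even α β k c 1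
  have e1 := casT_even α β k c (X + C a)
  have e2 := casT_even α β k c (X + C b)
  rw [← hL] at e0 e1 e2
  rw [mul_one] at e0
  rw [show (X + C c) * ((X + C b) * (X + C (-c))) = (X + C c) * (X + C (-c)) * (X + C b) by ring,
    show (X + C c) * ((X + C a) * (X + C (-c))) = (X + C c) * (X + C (-c)) * (X + C a) by ring,
    e0, e1, e2, mul_comm (X + C c) (X + C a), mul_comm (X + C c) (X + C b),
    mul_comm (X + C c) ((X + C a) * (X + C b))] at key
  apply mul_left_cancel₀ hκ
  linear_combination key

open Polynomial in
/-- The Casoratian (in direction `n1`) built from dKdV-type plane-wave entries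
satisfies the three reflected discrete AKP equations. -/
theorem stmt_13 (N : ℕ) (hN : 1 ≤ N) (a1 a2 a3 : ℂ) (k ρp ρm : Fin N → ℂ)
    (ha1 : ∀ j, a1 + k j ≠ 0) (ha1' : ∀ j, a1 - k j ≠ 0)
    (ha2 : ∀ j, a2 + k j ≠ 0) (ha2' : ∀ j, a2 - k j ≠ 0)
    (ha3 : ∀ j, a3 + k j ≠ 0) (ha3' : ∀ j, a3 - k j ≠ 0)
    (ψ : Fin N → ℤ → ℤ → ℤ → ℂ)
    (hψ : ∀ j n1 n2 n3, ψ j n1 n2 n3 =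
      ρp j * (a1 + k j) ^ n1 * (a2 + k j) ^ n2 * (a3 + k j) ^ n3 +
      ρm j * (a1 - k j) ^ n1 * (a2 - k j) ^ n2 * (a3 - k j) ^ n3)
    (τ : ℤ → ℤ → ℤ → ℂ)
    (hτ : ∀ n1 n2 n3, τ n1 n2 n3 =
      (Matrix.of fun j m : Fin N => ψ j (n1 + (m.1 : ℤ)) n2 n3).det) :
    ∀ n1 n2 n3 : ℤ,
      ((a2 - a3) * τ n1 n2 n3 * τ (n1 + 1) (n2 + 1) (n3 + 1) +
        (a3 + a1) * τ n1 n2 (n3 + 1) * τ (n1 + 1) (n2 + 1) n3 -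
        (a1 + a2) * τ n1 (n2 + 1) n3 * τ (n1 + 1) n2 (n3 + 1) = 0) ∧
      ((a3 - a1) * τ n1 n2 n3 * τ (n1 + 1) (n2 + 1) (n3 + 1) +
        (a1 + a2) * τ (n1 + 1) n2 n3 * τ n1 (n2 + 1) (n3 + 1) -
        (a2 + a3) * τ n1 n2 (n3 + 1) * τ (n1 + 1) (n2 + 1) n3 = 0) ∧
      ((a1 - a2) * τ n1 n2 n3 * τ (n1 + 1) (n2 + 1) (n3 + 1) +
        (a2 + a3) * τ n1 (n2 + 1) n3 * τ (n1 + 1) n2 (n3 + 1) -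
        (a3 + a1) * τ (n1 + 1) n2 n3 * τ n1 (n2 + 1) (n3 + 1) = 0) := by
  intro n1 n2 n3
  set L := waveL (fun j => ρp j * (a1 + k j) ^ n1 * (a2 + k j) ^ n2 * (a3 + k j) ^ n3)
    (fun j => ρm j * (a1 - k j) ^ n1 * (a2 - k j) ^ n2 * (a3 - k j) ^ n3) k with hL
  -- The columns of `τ` are the monic polynomials `(X + a1) ^ m` times the shift factors.
  have hT : ∀ d1 d2 d3 : ℕ, τ (n1 + d1) (n2 + d2) (n3 + d3) =
      casT L ((X + C a1) ^ d1 * (X + C a2) ^ d2 * (X + C a3) ^ d3) := by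
    intro d1 d2 d3
    rw [hτ, ← casT_eq_of_monic L _ (fun m => (X + C a1) ^ (m : ℕ))
      (fun m => by rw [(monic_X_add_C a1).natDegree_pow]; simp)
      (fun m => (monic_X_add_C a1).pow _), ← Matrix.det_transpose]
    change Matrix.det _ = Matrix.det _
    congr 1
    ext m j
    simp only [Matrix.transpose_apply, Matrix.of_apply, hψ, hL, waveL, LinearMap.coe_mk,
      AddHom.coe_mk, eval_mul, eval_pow, eval_add, eval_X, eval_C, zpow_add₀ (ha1 j),
      zpow_add₀ (ha2 j), zpow_add₀ (ha3 j), zpow_add₀ (ha1' j), zpow_add₀ (ha2' j),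
      zpow_add₀ (ha3' j), zpow_natCast]
    ring
  have t0 := hT 0 0 0
  have t1 := hT 1 0 0
  have t2 := hT 0 1 0
  have t3 := hT 0 0 1
  have t12 := hT 1 1 0
  have t13 := hT 1 0 1
  have t23 := hT 0 1 1
  have t123 := hT 1 1 1
  simp only [Nat.cast_zero, Nat.cast_one, add_zero, pow_zero, pow_one, one_mul, mul_one]
    at t0 t1 t2 t3 t12 t13 t23 t123
  have r1 := casT_reflected hN (fun j => ρp j * (a1 + k j) ^ n1 * (a2 + k j) ^ n2 * (a3 + k j) ^ n3)
    (fun j => ρm j * (a1 - k j) ^ n1 * (a2 - k j) ^ n2 * (a3 - k j) ^ n3) k a2 a3 a1 ha1 ha1' 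
  have r2 := casT_reflected hN (fun j => ρp j * (a1 + k j) ^ n1 * (a2 + k j) ^ n2 * (a3 + k j) ^ n3)
    (fun j => ρm j * (a1 - k j) ^ n1 * (a2 - k j) ^ n2 * (a3 - k j) ^ n3) k a3 a1 a2 ha2 ha2' 
  have r3 := casT_reflected hN (fun j => ρp j * (a1 + k j) ^ n1 * (a2 + k j) ^ n2 * (a3 + k j) ^ n3)
    (fun j => ρm j * (a1 - k j) ^ n1 * (a2 - k j) ^ n2 * (a3 - k j) ^ n3) k a1 a2 a3 ha3 ha3' 
  rw [← hL] at r1 r2 r3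
  rw [t0, t1, t2, t3, t12, t13, t23, t123]
  refine ⟨?_, ?_, ?_⟩
  · rw [show (X + C a2) * (X + C a3) * (X + C a1) =
      ((X + C a1) * (X + C a2) * (X + C a3) : ℂ[X]) by ring, mul_comm (X + C a2) (X + C a1),
      mul_comm (X + C a3) (X + C a1)] at r1
    linear_combination -r1
  · rw [show (X + C a3) * (X + C a1) * (X + C a2) =
      ((X + C a1) * (X + C a2) * (X + C a3) : ℂ[X]) by ring,
      mul_comm (X + C a3) (X + C a2)] at r2
    linear_combination -r2
  · linear_combination -r3
end
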